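/- Let (V,E,Ψ) be a strongly connected planar box-like self-affine GIFS satisfying the ROSC, and let (X_v)_{v∈V} be the associated graph-directed self-affine carpet family. Choose any positive weights (p_e) with ∑_{e:i(e)=v} p_e=1 for every v, defining t(0) and γ̂(0). Then for every v∈V the box dimension of X_v exists and dim_B X_v = γ̂(0). -/

import Mathlib

open MeasureTheory Filter Set
open scoped Classical

noncomputable section

namespace LqGIFS

/-! ### Mesh cubes, moment sums, L^q spectra, box dimension -/

/-- Closed cube of the `δ`-mesh of `ℝ`. -/
def meshCube1 (δ : ℝ) (k : ℤ) : Set ℝ := Set.Icc ((k : ℝ) * δ) (((k : ℝ) + 1) * δ)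

/-- Closed cube of the `δ`-mesh of `ℝ²`. -/
def meshCube2 (δ : ℝ) (k : ℤ × ℤ) : Set (ℝ × ℝ) :=
  (Set.Icc ((k.1 : ℝ) * δ) (((k.1 : ℝ) + 1) * δ)) ×ˢ
    (Set.Icc ((k.2 : ℝ) * δ) (((k.2 : ℝ) + 1) * δ))

/-- The moment sum `D_δ^q(ν)` for a measure on `ℝ` (cubes of zero measure are omitted,
so that at `q = 0` this counts the mesh cubes of positive measure). -/
def Dq1 (ν : Measure ℝ) (δ q : ℝ) : ℝ :=
  ∑' k : ℤ, if ν (meshCube1 δ k) = 0 then 0 else (ν (meshCube1 δ k)).toReal ^ q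

/-- The moment sum `D_δ^q(ν)` for a measure on `ℝ²`. -/
def Dq2 (ν : Measure (ℝ × ℝ)) (δ q : ℝ) : ℝ :=
  ∑' k : ℤ × ℤ, if ν (meshCube2 δ k) = 0 then 0 else (ν (meshCube2 δ k)).toReal ^ q

/-- The `L^q`-spectrum of a measure on `ℝ` exists and equals `s` (i.e. upper and lower
`L^q`-spectra coincide and equal `s`). -/
def HasLq1 (ν : Measure ℝ) (q s : ℝ) : Prop :=
  Tendsto (fun δ : ℝ => Real.log (Dq1 ν δ q) / (-Real.log δ))
    (nhdsWithin 0 (Set.Ioi 0)) (nhds s)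

/-- The `L^q`-spectrum of a measure on `ℝ²` exists and equals `s`. -/
def HasLq2 (ν : Measure (ℝ × ℝ)) (q s : ℝ) : Prop :=
  Tendsto (fun δ : ℝ => Real.log (Dq2 ν δ q) / (-Real.log δ))
    (nhdsWithin 0 (Set.Ioi 0)) (nhds s)

/-- Number of closed `δ`-mesh cubes of `ℝ²` meeting `X`. -/
def boxCount (X : Set (ℝ × ℝ)) (δ : ℝ) : ℕ :=
  Set.ncard {k : ℤ × ℤ | (X ∩ meshCube2 δ k).Nonempty}

/-- The box dimension of `X` exists and equals `d`. -/
def HasBoxDim (X : Set (ℝ × ℝ)) (d : ℝ) : Prop :=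
  Tendsto (fun δ : ℝ => Real.log (boxCount X δ) / (-Real.log δ))
    (nhdsWithin 0 (Set.Ioi 0)) (nhds d)

/-! ### Matrices: 1-norm, spectral radius, permutation matrices -/

/-- The 1-norm `‖A‖ = ∑_{i,j} |a_{ij}|` of a square matrix. -/
def mnorm {ι : Type*} [Fintype ι] (A : Matrix ι ι ℝ) : ℝ := ∑ i, ∑ j, |A i j|

/-- The spectral radius of a square real matrix, via the Gelfand formula. -/
def specRad {ι : Type*} [Fintype ι] [DecidableEq ι] (A : Matrix ι ι ℝ) : ℝ :=
  Filter.limsup (fun k : ℕ => (mnorm (A ^ k)) ^ ((k : ℝ)⁻¹)) Filter.atTop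

/-- A square 0-1 matrix with exactly one 1 in each row and each column. -/
def IsPermMatrix {ι : Type*} (Z : Matrix ι ι ℝ) : Prop :=
  (∀ i j, Z i j = 0 ∨ Z i j = 1) ∧ (∀ i, ∃! j, Z i j = 1) ∧ (∀ j, ∃! i, Z i j = 1)

/-! ### Directed graphs -/

/-- Strong connectivity of the finite directed graph with edge set `E`,
initial vertex map `ini` and terminal vertex map `ter`. -/
def GraphSC {V E : Type*} (ini ter : E → V) : Prop :=
  ∀ v v' : V, Relation.TransGen (fun u u' : V => ∃ e, ini e = u ∧ ter e = u') v v'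

/-- The matrix `F^{(q)}_{x,y}` with entry `p_{e'}^q a_{e'}^x b_{e'}^y` at `(e,e')` when
`t(e) = i(e')`, and `0` otherwise. -/
def FmatG {V E : Type*} (ini ter : E → V) (p a b : E → ℝ) (q x y : ℝ) :
    Matrix E E ℝ :=
  fun e e' => if ter e = ini e' then p e' ^ q * a e' ^ x * b e' ^ y else 0

/-- `f` is the entrywise product of the normalized left and right Perron vectors of the
irreducible matrix `F^{(q)}_{x,y(x)}` (spectral radius 1). -/
def IsPerronData {V E : Type*} [Fintype E] [DecidableEq E] (ini ter : E → V)
    (p a b : E → ℝ) (q x yx : ℝ) (f : E → ℝ) : Prop :=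
  specRad (FmatG ini ter p a b q x yx) = 1 ∧
  ∃ u v : E → ℝ, (∀ e, 0 < u e) ∧ (∀ e, 0 < v e) ∧ (∑ e, u e) = 1 ∧
    (FmatG ini ter p a b q x yx).mulVec u = u ∧
    (FmatG ini ter p a b q x yx).vecMul v = v ∧
    (∑ e, v e * u e) = 1 ∧ (∀ e, f e = v e * u e)

/-! ### Planar box-like graph-directed self-affine systems -/

/-- A planar box-like self-affine GIFS: a finite directed graph together with, for each
edge `e`, a contraction `ψ_e(z) = T_e z + t_e` whose linear part is the diagonal matrix
`diag(±a_e, ±b_e)` (when `diag e = true`) or the anti-diagonal matrix with entries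
`±a_e` (top right) and `±b_e` (bottom left) (when `diag e = false`), `0 < a_e, b_e < 1`. -/
structure BoxLikeGIFS (V E : Type*) where
  init : E → V
  term : E → V
  a : E → ℝ
  b : E → ℝ
  sa : E → ℝ
  sb : E → ℝ
  diag : E → Bool
  trans : E → ℝ × ℝ
  a_mem : ∀ e, a e ∈ Set.Ioo (0 : ℝ) 1
  b_mem : ∀ e, b e ∈ Set.Ioo (0 : ℝ) 1
  sa_mem : ∀ e, sa e = 1 ∨ sa e = -1
  sb_mem : ∀ e, sb e = 1 ∨ sb e = -1
  edge_exists : ∀ v, ∃ e, init e = v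

namespace BoxLikeGIFS

variable {V E : Type*}

/-- The contraction `ψ_e`. -/
def map (S : BoxLikeGIFS V E) (e : E) : ℝ × ℝ → ℝ × ℝ := fun z =>
  if S.diag e then
    (S.sa e * S.a e * z.1 + (S.trans e).1, S.sb e * S.b e * z.2 + (S.trans e).2)
  else
    (S.sa e * S.a e * z.2 + (S.trans e).1, S.sb e * S.b e * z.1 + (S.trans e).2)

def StronglyConnected (S : BoxLikeGIFS V E) : Prop := GraphSC S.init S.term

/-- The open unit square `(0,1)²`. -/
def unitSq : Set (ℝ × ℝ) := Set.Ioo (0 : ℝ) 1 ×ˢ Set.Ioo (0 : ℝ) 1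

/-- The rectangular open set condition. -/
def ROSC (S : BoxLikeGIFS V E) : Prop :=
  (∀ e : E, S.map e '' unitSq ⊆ unitSq) ∧
  ∀ e e' : E, e ≠ e' → S.init e = S.init e' →
    Disjoint (S.map e '' unitSq) (S.map e' '' unitSq)

/-- Positive weights summing to one at each vertex. -/
def IsWeights [Fintype E] (S : BoxLikeGIFS V E) (p : E → ℝ) : Prop :=
  (∀ e, 0 < p e) ∧ ∀ v : V, (∑ e : E, if S.init e = v then p e else 0) = 1

/-- `μ` is the associated graph-directed box-like self-affine measure family. -/
def IsGDMeasure [Fintype E] (S : BoxLikeGIFS V E) (p : E → ℝ)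
    (μ : V → Measure (ℝ × ℝ)) : Prop :=
  (∀ v, IsProbabilityMeasure (μ v)) ∧
  ∀ v : V, μ v =
    ∑ e : E, if S.init e = v then
      ENNReal.ofReal (p e) • ((μ (S.term e)).map (S.map e)) else (0 : Measure (ℝ × ℝ))

/-- `X` is the associated graph-directed self-affine carpet family. -/
def IsGDAttractor (S : BoxLikeGIFS V E) (X : V → Set (ℝ × ℝ)) : Prop :=
  (∀ v, (X v).Nonempty ∧ IsCompact (X v)) ∧
  ∀ v : V, X v = ⋃ e : E, ⋃ _ : S.init e = v, S.map e '' X (S.term e)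

/-- The matrix `F^{(q)}_{x,y}` of the system. -/
def Fmat (S : BoxLikeGIFS V E) (p : E → ℝ) (q x y : ℝ) : Matrix E E ℝ :=
  FmatG S.init S.term p S.a S.b q x y

/-- The `(2#E) × (2#E)` block matrix `𝒢^{(q)}_{x,y}`, indexed by `E × Bool`
(`false` = first index of the block, `true` = second). -/
def Gmat (S : BoxLikeGIFS V E) (p : E → ℝ) (τx τy : V → ℝ) (q x y : ℝ) :
    Matrix (E × Bool) (E × Bool) ℝ := fun i j =>
  if S.term i.1 = S.init j.1 then
    if S.diag j.1 then
      if i.2 = false ∧ j.2 = false then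
        p j.1 ^ q * S.a j.1 ^ (x + τx (S.term j.1)) * S.b j.1 ^ (y - τx (S.term j.1))
      else if i.2 = true ∧ j.2 = true then
        p j.1 ^ q * S.b j.1 ^ (x + τy (S.term j.1)) * S.a j.1 ^ (y - τy (S.term j.1))
      else 0
    else
      if i.2 = false ∧ j.2 = true then
        p j.1 ^ q * S.a j.1 ^ (x + τy (S.term j.1)) * S.b j.1 ^ (y - τy (S.term j.1))
      else if i.2 = true ∧ j.2 = false then
        p j.1 ^ q * S.b j.1 ^ (x + τx (S.term j.1)) * S.a j.1 ^ (y - τx (S.term j.1))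
      else 0
  else 0

/-! ### Words -/

/-- An admissible word: consecutive edges are composable. -/
def Admissible (S : BoxLikeGIFS V E) (w : List E) : Prop :=
  List.Chain' (fun e e' => S.term e = S.init e') w

/-- `(c_w, d_w)`: width and height of the rectangle `ψ_w([0,1]²)`. -/
def wdims (S : BoxLikeGIFS V E) : List E → ℝ × ℝ
  | [] => (1, 1)
  | e :: w =>
      if S.diag e then (S.a e * (wdims S w).1, S.b e * (wdims S w).2)
      else (S.a e * (wdims S w).2, S.b e * (wdims S w).1)

/-- Whether `T_w` is diagonal (`true`) or anti-diagonal (`false`). -/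
def wordDiag (S : BoxLikeGIFS V E) : List E → Bool
  | [] => true
  | e :: w => S.diag e == wordDiag S w

/-- The larger singular value `α₁(w) = max(c_w, d_w)` of `T_w`. -/
def alpha1 (S : BoxLikeGIFS V E) (w : List E) : ℝ := max (S.wdims w).1 (S.wdims w).2

/-- The smaller singular value `α₂(w) = min(c_w, d_w)` of `T_w`. -/
def alpha2 (S : BoxLikeGIFS V E) (w : List E) : ℝ := min (S.wdims w).1 (S.wdims w).2

/-- Initial vertex of a (nonempty) word. -/
def wordInit [Nonempty V] (S : BoxLikeGIFS V E) (w : List E) : V :=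
  (w.head?.map S.init).getD (Classical.arbitrary V)

/-- Terminal vertex of a (nonempty) word. -/
def wordTerm [Nonempty V] (S : BoxLikeGIFS V E) (w : List E) : V :=
  (w.getLast?.map S.term).getD (Classical.arbitrary V)

/-- `p_w = p_{w_1} ⋯ p_{w_k}`. -/
def wordProb (p : E → ℝ) (w : List E) : ℝ := (w.map p).prod

/-- `τ_w(q)`: given the values `τx v`, `τy v` of the `L^q`-spectra of the two coordinate
projections of `μ_v`, this is the `L^q`-spectrum of the projection of `μ_{t(w)} ∘ ψ_w⁻¹`
onto the longest side of `ψ_w([0,1]²)`, i.e. `τx (t w)` if `π_w = π_x` and `τy (t w)`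
otherwise. -/
def wordTau [Nonempty V] (S : BoxLikeGIFS V E) (τx τy : V → ℝ) (w : List E) : ℝ :=
  if ((S.wdims w).2 ≤ (S.wdims w).1 ↔ S.wordDiag w = true) then τx (S.wordTerm w)
  else τy (S.wordTerm w)

/-- The modified singular value function
`φ^{s,q}(w) = p_w^q α₁(w)^{τ_w(q)} α₂(w)^{s - τ_w(q)}`. -/
def msvf [Nonempty V] (S : BoxLikeGIFS V E) (p : E → ℝ) (τx τy : V → ℝ)
    (s q : ℝ) (w : List E) : ℝ :=
  wordProb p w ^ q * S.alpha1 w ^ (S.wordTau τx τy w) *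
    S.alpha2 w ^ (s - S.wordTau τx τy w)

/-- The modified singular value function matrix `A_k^{s,q}`. -/
def Amat [Nonempty V] [Fintype E] (S : BoxLikeGIFS V E) (p : E → ℝ) (τx τy : V → ℝ)
    (s q : ℝ) (k : ℕ) : Matrix V V ℝ := fun v v' =>
  ∑ f : Fin k → E,
    if S.Admissible (List.ofFn f) ∧ S.wordInit (List.ofFn f) = v ∧
        S.wordTerm (List.ofFn f) = v'
    then S.msvf p τx τy s q (List.ofFn f) else 0

/-- The family `E^*_δ` of admissible words whose shortest side drops below `δ`
exactly at the last letter. -/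
def EstarDelta (S : BoxLikeGIFS V E) (δ : ℝ) : Set (List E) :=
  {w | w ≠ [] ∧ S.Admissible w ∧ S.alpha2 w < δ ∧ δ ≤ S.alpha2 w.dropLast}

end BoxLikeGIFS

/-! ### Partition of the projections, for the splitting proposition -/

/-- The projection family: `(v, false) ↦ μ_v^x` and `(v, true) ↦ μ_v^y`. -/
def projMeas {V : Type*} (μ : V → Measure (ℝ × ℝ)) (i : V × Bool) : Measure ℝ :=
  if i.2 then (μ i.1).map Prod.snd else (μ i.1).map Prod.fst

/-- `A`, `B` is a partition of the projection family `{μ_v^x, μ_v^y}_v` into two disjoint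
families of cardinality `#V`, on each of which the `L^q`-spectra exist and share a common
value, and which splits `{μ_v^x, μ_v^y}` for each `v`. -/
def GoodPartition {V : Type*} [Fintype V] (μ : V → Measure (ℝ × ℝ))
    (A B : Finset (V × Bool)) : Prop :=
  Disjoint A B ∧ A ∪ B = Finset.univ ∧
  A.card = Fintype.card V ∧ B.card = Fintype.card V ∧
  ∃ τA τB : ℝ → ℝ,
    (∀ q : ℝ, 0 ≤ q → ∀ i ∈ A, HasLq1 (projMeas μ i) q (τA q)) ∧
    (∀ q : ℝ, 0 ≤ q → ∀ i ∈ B, HasLq1 (projMeas μ i) q (τB q)) ∧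
    ∀ v : V, ((v, false) ∈ A ∧ (v, true) ∈ B) ∨ ((v, false) ∈ B ∧ (v, true) ∈ A)

end LqGIFS

end

open LqGIFS MeasureTheory Filter Set

/-!
Fix `q = 0`. The projections of `X v` to the axes are the supports of the projections of `μ v`, so
`τ v false` and `τ v true` are their box dimensions. The preimage under `ψ_e` of a box with half
side lengths `δ` is again a box. Covers of `X v` by such boxes can therefore be assembled from those
of the `X (t(e))`, and by the ROSC the same holds for packings; once a side of the box has length of
order one, the problem is one-dimensional. The monomials `δ_i ^ (-τ) * δ_j ^ (-(γ - τ))` scale under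
this recursion by the entries of `𝒢_{0,γ}`, whose spectral radius is `1`. Its positive
supersolutions and nonnegative subsolutions turn the recursion into bounds `δ ^ (-γ)` for covers and
packings, up to subpolynomial factors.

For packings the monomials have to be dominated by the one-dimensional counts when one side has
order one, which requires `γ ≤ t`. Otherwise `τ` could be raised to `τ + η` without destroying the
subsolution, and the resulting packings would be larger than the product of the two projections
allows. The subsolution may vanish at some vertices, but the maps `ψ_e` carry the lower bound from
one vertex to every other along the strongly connected graph.
-/

namespace LqGIFS

section PowerLaws

open Topology

lemma eventually_rpow_le_of_tendsto_log_div {f : ℝ → ℝ} {s ε : ℝ}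
    (hf : Tendsto (fun δ => Real.log (f δ) / -Real.log δ) (𝓝[>] 0) (𝓝 s))
    (hpos : ∀ᶠ δ in 𝓝[>] 0, 0 < f δ) (hε : 0 < ε) :
    ∀ᶠ δ in 𝓝[>] 0, δ ^ (-(s - ε)) ≤ f δ ∧ f δ ≤ δ ^ (-(s + ε)) := by
  filter_upwards [hf (Ioo_mem_nhds (sub_lt_self s hε) (lt_add_of_pos_right s hε)), hpos,
    Ioo_mem_nhdsGT one_pos] with δ ⟨hlo, hhi⟩ hfδ ⟨hδ, hδ1⟩
  have hlog : 0 < -Real.log δ := neg_pos.2 (Real.log_neg hδ hδ1)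
  rw [lt_div_iff₀ hlog] at hlo
  rw [div_lt_iff₀ hlog] at hhi
  rw [Real.le_rpow_iff_log_le hfδ hδ, Real.rpow_le_iff_le_log hδ hfδ]
  constructor <;> linarith

lemma tendsto_log_div_of_rpow_bounds {f : ℝ → ℝ} {s : ℝ}
    (hlo : ∀ ε > 0, ∃ c > 0, ∀ᶠ δ in 𝓝[>] 0, c * δ ^ (-(s - ε)) ≤ f δ)
    (hhi : ∀ ε > 0, ∃ C > 0, ∀ᶠ δ in 𝓝[>] 0, f δ ≤ C * δ ^ (-(s + ε))) :
    Tendsto (fun δ => Real.log (f δ) / -Real.log δ) (𝓝[>] 0) (𝓝 s) := by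
  have hlim : ∀ c d : ℝ, Tendsto (fun δ => Real.log c / -Real.log δ + d) (𝓝[>] 0) (𝓝 d) := by
    intro c d
    simpa using (tendsto_const_nhds.div_atTop
      (tendsto_neg_atBot_atTop.comp Real.tendsto_log_nhdsGT_zero)).add_const d
  have hlog : ∀ c d δ : ℝ, 0 < c → 0 < δ → δ < 1 →
      Real.log (c * δ ^ (-d)) / -Real.log δ = Real.log c / -Real.log δ + d := by
    intro c d δ hc hδ hδ1
    have := (Real.log_neg hδ hδ1).ne
    rw [Real.log_mul hc.ne' (Real.rpow_pos_of_pos hδ _).ne', Real.log_rpow hδ]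
    field
  refine tendsto_order.2 ⟨fun a ha => ?_, fun a ha => ?_⟩
  · obtain ⟨c, hc, hle⟩ := hlo ((s - a) / 2) (by linarith)
    filter_upwards [(hlim c _).eventually_const_lt (by linarith : a < s - (s - a) / 2), hle,
      Ioo_mem_nhdsGT one_pos] with δ h hle ⟨hδ, hδ1⟩
    rw [← hlog c _ δ hc hδ hδ1] at h
    have := neg_pos.2 (Real.log_neg hδ hδ1)
    have := Real.rpow_pos_of_pos hδ (-(s - (s - a) / 2))
    exact h.trans_le (by gcongr)
  · obtain ⟨C, hC, hle⟩ := hhi ((a - s) / 2) (by linarith)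
    obtain ⟨c, hc, hge⟩ := hlo 1 one_pos
    filter_upwards [(hlim C _).eventually_lt_const (by linarith : s + (a - s) / 2 < a), hle, hge,
      Ioo_mem_nhdsGT one_pos] with δ h hle hge ⟨hδ, hδ1⟩
    rw [← hlog C _ δ hC hδ hδ1] at h
    have := neg_pos.2 (Real.log_neg hδ hδ1)
    have := (mul_pos hc (Real.rpow_pos_of_pos hδ _)).trans_le hge
    exact lt_of_le_of_lt (by gcongr) h

lemma exponent_le_of_rpow_le {A B s s' : ℝ} (hA : 0 < A)
    (h : ∀ᶠ δ in 𝓝[>] (0 : ℝ), A * δ ^ (-s) ≤ B * δ ^ (-s')) : s ≤ s' := by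
  by_contra! hlt
  have hzero : Tendsto (fun δ : ℝ => B * δ ^ (s - s')) (𝓝[>] 0) (𝓝 0) := by
    have hs : 0 < s - s' := sub_pos.2 hlt
    have := ((Real.continuousAt_rpow_const 0 _ (Or.inr hs.le)).tendsto.const_mul B).mono_left
      (nhdsWithin_le_nhds (s := Ioi (0 : ℝ)))
    simpa [Real.zero_rpow hs.ne'] using this
  obtain ⟨δ, hδA, hle, hδ⟩ :=
    ((hzero.eventually_lt_const hA).and (h.and self_mem_nhdsWithin)).exists
  have hδ : 0 < δ := hδ
  refine hδA.not_ge ?_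
  calc A = A * δ ^ (-s) * δ ^ s := by
        rw [mul_assoc, ← Real.rpow_add hδ, neg_add_cancel, Real.rpow_zero, mul_one]
    _ ≤ B * δ ^ (-s') * δ ^ s := by gcongr
    _ = B * δ ^ (s - s') := by
        rw [mul_assoc, ← Real.rpow_add hδ, neg_add_eq_sub]

lemma exists_rpow_le_on_Icc (s : ℝ) {m M : ℝ} (hm : 0 < m) :
    ∃ C > 0, ∀ x ∈ Icc m M, x ^ s ≤ C := by
  have hcont : ContinuousOn (fun x : ℝ => x ^ s) (Icc m M) := fun x hx =>
    (Real.continuousAt_rpow_const _ _ (Or.inl (hm.trans_le hx.1).ne')).continuousWithinAt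
  obtain ⟨C, hC⟩ := isCompact_Icc.bddAbove_image hcont
  exact ⟨max C 1, by positivity, fun x hx => (hC (mem_image_of_mem _ hx)).trans (le_max_left _ _)⟩

end PowerLaws

section Spectral

open Topology
open scoped Matrix

variable {ι : Type*} [Fintype ι]

lemma mnorm_nonneg (A : Matrix ι ι ℝ) : 0 ≤ mnorm A :=
  Finset.sum_nonneg fun _ _ => Finset.sum_nonneg fun _ _ => abs_nonneg _

lemma sum_abs_row_le_mnorm (A : Matrix ι ι ℝ) (i : ι) : ∑ j, |A i j| ≤ mnorm A :=
  Finset.single_le_sum (f := fun i => ∑ j, |A i j|)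
    (fun _ _ => Finset.sum_nonneg fun _ _ => abs_nonneg _) (Finset.mem_univ i)

attribute [local instance] Matrix.linftyOpNormedRing Matrix.linftyOpNormedAlgebra

lemma sum_abs_row_le_norm (A : Matrix ι ι ℝ) (i : ι) :
    ∑ j, |A i j| ≤ ‖A.map Complex.ofRealHom‖ := by
  have h := Finset.le_sup (f := fun i => ∑ j, ‖A.map Complex.ofRealHom i j‖₊) (Finset.mem_univ i)
  rw [Matrix.linfty_opNorm_def, ← NNReal.coe_le_coe] at *
  simpa using h

lemma mnorm_le_card_mul_norm (A : Matrix ι ι ℝ) :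
    mnorm A ≤ Fintype.card ι * ‖A.map Complex.ofRealHom‖ :=
  (Finset.sum_le_sum fun i _ => sum_abs_row_le_norm A i).trans_eq (by simp)

lemma norm_le_mnorm (A : Matrix ι ι ℝ) : ‖A.map Complex.ofRealHom‖ ≤ mnorm A := by
  rw [Matrix.linfty_opNorm_def, ← NNReal.coe_mk (mnorm A) (mnorm_nonneg A), NNReal.coe_le_coe]
  refine Finset.sup_le fun i _ => NNReal.coe_le_coe.1 ?_
  simpa using sum_abs_row_le_mnorm A i

variable [DecidableEq ι]

lemma tendsto_mnorm_pow_rpow_inv [Nonempty ι] (A : Matrix ι ι ℝ) :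
    Tendsto (fun k : ℕ => mnorm (A ^ k) ^ ((k : ℝ)⁻¹)) atTop
      (𝓝 (spectralRadius ℂ (A.map Complex.ofRealHom)).toReal) := by
  set B := A.map Complex.ofRealHom
  have hpow : ∀ k, (A ^ k).map Complex.ofRealHom = B ^ k := map_pow Complex.ofRealHom.mapMatrix A
  have hfin : spectralRadius ℂ B ≠ ⊤ :=
    ((spectrum.spectralRadius_le_nnnorm B).trans_lt ENNReal.coe_lt_top).ne
  have hgelfand : Tendsto (fun k : ℕ => ‖B ^ k‖ ^ ((k : ℝ)⁻¹)) atTop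
      (𝓝 (spectralRadius ℂ B).toReal) := by
    refine ((ENNReal.tendsto_toReal hfin).comp
      (spectrum.pow_norm_pow_one_div_tendsto_nhds_spectralRadius B)).congr fun k => ?_
    rw [Function.comp_apply, one_div, ENNReal.toReal_ofReal (by positivity)]
  have hcard : Tendsto (fun k : ℕ => (Fintype.card ι : ℝ) ^ ((k : ℝ)⁻¹)) atTop (𝓝 1) := by
    have := (Real.continuousAt_const_rpow (b := 0) (Nat.cast_ne_zero.2
      (Fintype.card_ne_zero (α := ι)))).tendsto.comp tendsto_inv_atTop_nhds_zero_nat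
    simpa [Function.comp_def] using this
  refine tendsto_of_tendsto_of_tendsto_of_le_of_le hgelfand
    (by simpa using hcard.mul hgelfand) (fun k => ?_) fun k => ?_
  · rw [← hpow]
    gcongr
    exact norm_le_mnorm _
  · dsimp only
    rw [← Real.mul_rpow (by positivity) (by positivity), ← hpow]
    exact Real.rpow_le_rpow (mnorm_nonneg _) (mnorm_le_card_mul_norm _) (by positivity)

lemma exists_pos_supersolution {A : Matrix ι ι ℝ} (hA : ∀ i j, 0 ≤ A i j) {c : ℝ} (hc0 : 0 < c)
    (hc : specRad A < c) : ∃ u : ι → ℝ, (∀ i, 1 ≤ u i) ∧ ∀ i, (A *ᵥ u) i ≤ c * u i := by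
  cases isEmpty_or_nonempty ι
  · exact ⟨0, isEmptyElim, isEmptyElim⟩
  obtain ⟨n, hn, hn1⟩ := ((eventually_lt_of_limsup_lt hc
    (tendsto_mnorm_pow_rpow_inv A).isBoundedUnder_le).and (eventually_ge_atTop 1)).exists
  let B := c⁻¹ • A
  have hB : ∀ i j, 0 ≤ B i j := fun i j => mul_nonneg (inv_nonneg.2 hc0.le) (hA i j)
  have hBk : ∀ k i, 0 ≤ ((B ^ k) *ᵥ 1) i := fun k i =>
    Finset.sum_nonneg fun j _ => mul_nonneg (Matrix.pow_apply_nonneg hB k i j) zero_le_one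
  have hBn : ∀ i, ((B ^ n) *ᵥ 1) i ≤ 1 := fun i => by
    have hAn : mnorm (A ^ n) ≤ c ^ n := by
      rw [← Real.rpow_inv_natCast_pow (mnorm_nonneg (A ^ n)) (by omega : n ≠ 0)]
      exact pow_le_pow_left₀ (Real.rpow_nonneg (mnorm_nonneg _) _) hn.le n
    calc ((B ^ n) *ᵥ 1) i = (c ^ n)⁻¹ * ∑ j, (A ^ n) i j := by
          simp [B, smul_pow, Matrix.mulVec, dotProduct, Finset.mul_sum]
      _ ≤ (c ^ n)⁻¹ * c ^ n := by
          gcongr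
          exact (Finset.sum_le_sum fun j _ => le_abs_self _).trans
            ((sum_abs_row_le_mnorm _ i).trans hAn)
      _ = 1 := inv_mul_cancel₀ (by positivity)
  refine ⟨∑ k ∈ Finset.range n, (B ^ k) *ᵥ 1, fun i => ?_, fun i => ?_⟩
  · have := Finset.single_le_sum (f := fun k => ((B ^ k) *ᵥ 1) i) (fun k _ => hBk k i)
      (Finset.mem_range.2 hn1)
    simpa using this
  · have htel := (Finset.sum_range_succ (fun k => ((B ^ k) *ᵥ 1) i) n).symm.trans
      (Finset.sum_range_succ' (fun k => ((B ^ k) *ᵥ 1) i) n)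
    have hone : ((B ^ 0) *ᵥ 1) i = 1 := by simp
    have hAB : A = c • B := (smul_inv_smul₀ hc0.ne' A).symm
    have hAu : (A *ᵥ ∑ k ∈ Finset.range n, (B ^ k) *ᵥ 1) i
        = c * ∑ k ∈ Finset.range n, ((B ^ (k + 1)) *ᵥ 1) i := by
      rw [hAB, Matrix.smul_mulVec, Pi.smul_apply, smul_eq_mul]
      simp only [Matrix.mulVec_sum, Matrix.mulVec_mulVec, ← pow_succ', Finset.sum_apply]
    rw [hAu, Finset.sum_apply]
    exact mul_le_mul_of_nonneg_left (by linarith [hBn i]) hc0.le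

lemma exists_nonneg_subsolution [Nonempty ι] {A : Matrix ι ι ℝ} (hA : ∀ i j, 0 ≤ A i j) :
    ∃ h : ι → ℝ, (∀ i, 0 ≤ h i) ∧ (∃ i, 0 < h i) ∧ ∀ i, specRad A * h i ≤ (A *ᵥ h) i := by
  set B := A.map Complex.ofRealHom with hB
  obtain ⟨z, hz, hzr⟩ := spectrum.exists_nnnorm_eq_spectralRadius B
  have hρ : specRad A = ‖z‖ := by
    rw [specRad, (tendsto_mnorm_pow_rpow_inv A).limsup_eq, ← hB, ← hzr, ENNReal.coe_toReal,
      coe_nnnorm]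
  rw [← Matrix.spectrum_toLin', ← Module.End.hasEigenvalue_iff_mem_spectrum] at hz
  obtain ⟨x, hx, hx0⟩ := hz.exists_hasEigenvector
  rw [Module.End.mem_eigenspace_iff, Matrix.toLin'_apply] at hx
  obtain ⟨i₀, hi₀⟩ := Function.ne_iff.1 hx0
  refine ⟨fun i => ‖x i‖, fun i => norm_nonneg _, ⟨i₀, norm_pos_iff.2 hi₀⟩, fun i => ?_⟩
  calc specRad A * ‖x i‖ = ‖(B *ᵥ x) i‖ := by rw [hx, hρ, Pi.smul_apply, norm_smul]
    _ ≤ ∑ j, ‖B i j * x j‖ := norm_sum_le _ _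
    _ = (A *ᵥ fun i => ‖x i‖) i := Finset.sum_congr rfl fun j _ => by
        simp [hB, abs_of_nonneg (hA i j)]

end Spectral

section Covering

open Topology

variable {α β : Type*} [PseudoMetricSpace α] [PseudoMetricSpace β]

/-- The closed balls of radius `r` centred at the points of the finite set `F` cover `Y`:
`Metric.IsCover` with a real radius and finitely many centres. -/
def IsBallCover (Y : Set α) (r : ℝ) (F : Finset α) : Prop := ∀ y ∈ Y, ∃ z ∈ F, dist y z ≤ r

/-- Covering numbers of `Y` at scale `r → 0` are `O(r ^ (-s))`. -/
def CoveringUpperBound (Y : Set α) (s : ℝ) : Prop :=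
  ∃ C > 0, ∀ᶠ r in 𝓝[>] (0 : ℝ), ∃ F, IsBallCover Y r F ∧ (F.card : ℝ) ≤ C * r ^ (-s)

/-- Covering numbers of `Y` at scale `r → 0` are at least a constant times `r ^ (-s)`. -/
def CoveringLowerBound (Y : Set α) (s : ℝ) : Prop :=
  ∃ c > 0, ∀ᶠ r in 𝓝[>] (0 : ℝ), ∀ F, IsBallCover Y r F → c * r ^ (-s) ≤ F.card

/-- Covering numbers of `Y` at scale `r → 0` are of order `r ^ (-s)` up to subpolynomial factors,
i.e. `Y` has box dimension `s` in terms of covering numbers. -/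
def HasCoveringExponent (Y : Set α) (s : ℝ) : Prop :=
  ∀ ε > 0, CoveringUpperBound Y (s + ε) ∧ CoveringLowerBound Y (s - ε)

variable {Y : Set α} {Z : Set β} {r s s' : ℝ}

lemma IsBallCover.mono {Y' : Set α} {r' : ℝ} {F : Finset α} (hF : IsBallCover Y r F)
    (hY : Y' ⊆ Y) (hr : r ≤ r') : IsBallCover Y' r' F := fun y hy =>
  let ⟨z, hz, hyz⟩ := hF y (hY hy)
  ⟨z, hz, hyz.trans hr⟩

lemma IsBallCover.prod {F : Finset α} {G : Finset β} (hF : IsBallCover Y r F)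
    (hG : IsBallCover Z r G) : IsBallCover (Y ×ˢ Z) r (F ×ˢ G) := by
  rintro ⟨y, z⟩ ⟨hy, hz⟩
  obtain ⟨y', hy', hyy'⟩ := hF y hy
  obtain ⟨z', hz', hzz'⟩ := hG z hz
  exact ⟨(y', z'), Finset.mk_mem_product hy' hz', max_le hyy' hzz'⟩

lemma IsBallCover.card_pos {F : Finset α} (hF : IsBallCover Y r F) (hY : Y.Nonempty) :
    0 < F.card :=
  let ⟨z, hz, _⟩ := hF _ hY.some_mem
  Finset.card_pos.2 ⟨z, hz⟩

lemma IsBallCover.exists_of_antilipschitzWith {K : NNReal} {f : α → β} (hf : AntilipschitzWith K f)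
    (hYZ : MapsTo f Y Z) {F : Finset β} (hF : IsBallCover Z r F) :
    ∃ G : Finset α, IsBallCover Y (2 * K * r) G ∧ G.card ≤ F.card := by
  rcases Y.eq_empty_or_nonempty with rfl | ⟨y₀, -⟩
  · exact ⟨∅, fun _ h => h.elim, by simp⟩
  let g : β → α := fun z => if h : ∃ y, dist (f y) z ≤ r then h.choose else y₀
  refine ⟨F.image g, fun y hy => ?_, Finset.card_image_le⟩
  obtain ⟨z, hz, hyz⟩ := hF (f y) (hYZ hy)
  have hgz : dist (f (g z)) z ≤ r := by
    have h : ∃ y, dist (f y) z ≤ r := ⟨y, hyz⟩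
    simpa only [g, dif_pos h] using h.choose_spec
  refine ⟨g z, Finset.mem_image_of_mem g hz, (hf.le_mul_dist y (g z)).trans ?_⟩
  calc K * dist (f y) (f (g z)) ≤ K * (r + r) := by
        gcongr
        exact (dist_triangle_right _ _ z).trans (add_le_add hyz hgz)
    _ = 2 * K * r := by ring

lemma CoveringUpperBound.exists_forall_le (h : CoveringUpperBound Y s) (R : ℝ) :
    ∃ C > 0, ∀ r, 0 < r → r ≤ R → ∃ F, IsBallCover Y r F ∧ (F.card : ℝ) ≤ C * r ^ (-s) := by
  obtain ⟨C, hC, hev⟩ := h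
  obtain ⟨r₀, hr₀, hsmall⟩ := (nhdsGT_basis (0 : ℝ)).eventually_iff.1 hev
  obtain ⟨F, hF, hFcard⟩ := hsmall (x := r₀ / 2) ⟨by positivity, by linarith⟩
  obtain ⟨D, -, hDle⟩ := exists_rpow_le_on_Icc s (M := R) hr₀
  refine ⟨max C (C * (r₀ / 2) ^ (-s) * D), by positivity, fun r hr hrR => ?_⟩
  rcases lt_or_ge r r₀ with hlt | hge
  · obtain ⟨G, hG, hGcard⟩ := hsmall ⟨hr, hlt⟩
    exact ⟨G, hG, hGcard.trans (by gcongr; exact le_max_left _ _)⟩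
  · refine ⟨F, hF.mono Subset.rfl (by linarith), hFcard.trans ?_⟩
    have hone : 1 ≤ D * r ^ (-s) := by
      rw [Real.rpow_neg hr.le, ← div_eq_mul_inv, one_le_div (by positivity)]
      exact hDle r ⟨hge, hrR⟩
    calc C * (r₀ / 2) ^ (-s) ≤ C * (r₀ / 2) ^ (-s) * (D * r ^ (-s)) :=
          le_mul_of_one_le_right (by positivity) hone
      _ ≤ max C (C * (r₀ / 2) ^ (-s) * D) * r ^ (-s) := by
          rw [← mul_assoc]
          gcongr
          exact le_max_right _ _

lemma CoveringLowerBound.exists_forall_le (h : CoveringLowerBound Y s) (hY : Y.Nonempty) (R : ℝ) :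
    ∃ c > 0, ∀ r, 0 < r → r ≤ R → ∀ F, IsBallCover Y r F → c * r ^ (-s) ≤ F.card := by
  obtain ⟨c, hc, hev⟩ := h
  obtain ⟨r₀, hr₀, hsmall⟩ := (nhdsGT_basis (0 : ℝ)).eventually_iff.1 hev
  obtain ⟨D, hD, hDle⟩ := exists_rpow_le_on_Icc (-s) (M := R) hr₀
  refine ⟨min c D⁻¹, by positivity, fun r hr hrR F hF => ?_⟩
  rcases lt_or_ge r r₀ with hlt | hge
  · exact le_trans (by gcongr; exact min_le_left _ _) (hsmall ⟨hr, hlt⟩ F hF)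
  · calc min c D⁻¹ * r ^ (-s) ≤ D⁻¹ * D := by
          gcongr
          exacts [min_le_right _ _, hDle r ⟨hge, hrR⟩]
      _ = 1 := inv_mul_cancel₀ hD.ne'
      _ ≤ F.card := mod_cast hF.card_pos hY

lemma CoveringUpperBound.mono (h : CoveringUpperBound Y s) {Y' : Set α} (hY : Y' ⊆ Y) :
    CoveringUpperBound Y' s :=
  let ⟨C, hC, hev⟩ := h
  ⟨C, hC, hev.mono fun _ ⟨F, hF, hFcard⟩ => ⟨F, hF.mono hY le_rfl, hFcard⟩⟩

lemma CoveringUpperBound.prod (h : CoveringUpperBound Y s) (h' : CoveringUpperBound Z s') :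
    CoveringUpperBound (Y ×ˢ Z) (s + s') := by
  obtain ⟨C, hC, hev⟩ := h
  obtain ⟨C', hC', hev'⟩ := h'
  refine ⟨C * C', by positivity, ?_⟩
  filter_upwards [hev, hev', self_mem_nhdsWithin] with r ⟨F, hF, hFcard⟩ ⟨G, hG, hGcard⟩ hr
  refine ⟨F ×ˢ G, hF.prod hG, ?_⟩
  rw [mem_Ioi] at hr
  calc ((F ×ˢ G).card : ℝ) = F.card * G.card := mod_cast Finset.card_product F G
    _ ≤ C * r ^ (-s) * (C' * r ^ (-s')) := by gcongr
    _ = C * C' * r ^ (-(s + s')) := by rw [neg_add, Real.rpow_add hr]; ring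

lemma CoveringLowerBound.of_antilipschitzWith {K : NNReal} {f : α → β}
    (h : CoveringLowerBound Y s) (hf : AntilipschitzWith K f) (hYZ : MapsTo f Y Z) :
    CoveringLowerBound Z s := by
  obtain ⟨c, hc, hev⟩ := h
  have hL : (0 : ℝ) < 2 * (K + 1) := by positivity
  have hscale : Tendsto (fun r : ℝ => 2 * (K + 1) * r) (𝓝[>] 0) (𝓝[>] 0) := by
    refine tendsto_nhdsWithin_iff.2 ⟨?_, ?_⟩
    · exact ((continuous_const_mul _).tendsto' _ _ (mul_zero _)).mono_left nhdsWithin_le_nhds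
    · filter_upwards [self_mem_nhdsWithin] with r hr using mul_pos hL hr
  refine ⟨c * (2 * (K + 1)) ^ (-s), by positivity, ?_⟩
  filter_upwards [hscale.eventually hev, self_mem_nhdsWithin] with r hr hr0 F hF
  rw [mem_Ioi] at hr0
  obtain ⟨G, hG, hGF⟩ := hF.exists_of_antilipschitzWith hf hYZ
  rw [mul_assoc, ← Real.mul_rpow hL.le hr0.le]
  exact (hr G (hG.mono Subset.rfl (by gcongr; simp))).trans (mod_cast hGF)

lemma CoveringLowerBound.le (h : CoveringLowerBound Y s) (h' : CoveringUpperBound Y s') :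
    s ≤ s' := by
  obtain ⟨c, hc, hev⟩ := h
  obtain ⟨C, -, hev'⟩ := h'
  refine exponent_le_of_rpow_le hc (B := C) ?_
  filter_upwards [hev, hev'] with r hr ⟨F, hF, hFcard⟩ using (hr F hF).trans hFcard

lemma HasCoveringExponent.le_of_antilipschitzWith {K : NNReal} {f : α → β}
    (h : HasCoveringExponent Y s) (h' : HasCoveringExponent Z s') (hf : AntilipschitzWith K f)
    (hYZ : MapsTo f Y Z) : s ≤ s' := by
  refine le_of_forall_pos_le_add fun ε hε => ?_
  have := ((h (ε / 2) (half_pos hε)).2.of_antilipschitzWith hf hYZ).le (h' (ε / 2) (half_pos hε)).1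
  linarith

end Covering

section Line

open Topology

/-- Five consecutive indices, among them all `k` with `|k * δ - z| ≤ 2 * δ`: the mesh intervals
that a ball of radius `δ` around `z` can meet. -/
noncomputable def nearIndices (δ z : ℝ) : Finset ℤ := Finset.Icc (⌊z / δ⌋ - 2) (⌊z / δ⌋ + 2)

lemma card_nearIndices (δ z : ℝ) : (nearIndices δ z).card = 5 := by
  rw [nearIndices, Int.card_Icc]
  omega

variable {δ r s y z : ℝ}

lemma mem_nearIndices (hδ : 0 < δ) {k : ℤ} (h : |k * δ - z| ≤ 2 * δ) : k ∈ nearIndices δ z := by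
  obtain ⟨hlo, hhi⟩ := abs_le.1 h
  have hk : (⌊z / δ⌋ : ℝ) - 2 ≤ k := by
    have : z / δ ≤ k + 2 := by rw [div_le_iff₀ hδ]; linarith
    linarith [Int.floor_le (z / δ)]
  have hk' : k - 2 ≤ ⌊z / δ⌋ := by
    rw [Int.le_floor, le_div_iff₀ hδ]
    push_cast
    linarith
  rw [nearIndices, Finset.mem_Icc]
  exact ⟨mod_cast hk, by omega⟩

lemma mem_nearIndices_of_mem_meshCube1 (hδ : 0 < δ) {k : ℤ} (hy : y ∈ meshCube1 δ k)
    (hyz : dist y z ≤ δ) : k ∈ nearIndices δ z := by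
  obtain ⟨hlo, hhi⟩ := hy
  obtain ⟨hlo', hhi'⟩ := abs_le.1 (Real.dist_eq y z ▸ hyz)
  exact mem_nearIndices hδ (abs_le.2 ⟨by linarith, by linarith⟩)

lemma mem_meshCube1_floor (hδ : 0 < δ) (y : ℝ) : y ∈ meshCube1 δ ⌊y / δ⌋ :=
  ⟨(le_div_iff₀ hδ).1 (Int.floor_le _), (div_le_iff₀ hδ).1 (Int.lt_floor_add_one _).le⟩

/-- Indices of the mesh intervals of positive measure; `Dq1 ν δ 0` counts them. -/
def chargedIndices (ν : Measure ℝ) (δ : ℝ) : Set ℤ := {k | ν (meshCube1 δ k) ≠ 0}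

variable {ν : Measure ℝ}

lemma chargedIndices_subset (hδ : 0 < δ) {F : Finset ℝ} (hF : IsBallCover ν.support δ F) :
    chargedIndices ν δ ⊆ (F.biUnion (nearIndices δ) : Finset ℤ) := by
  intro k hk
  obtain ⟨y, hyk, hyν⟩ := Measure.nonempty_inter_support_of_pos (pos_iff_ne_zero.2 hk)
  obtain ⟨z, hz, hyz⟩ := hF y hyν
  exact Finset.mem_biUnion.2 ⟨z, hz, mem_nearIndices_of_mem_meshCube1 hδ hyk hyz⟩

lemma exists_charged_near (hδ : 0 < δ) (hy : y ∈ ν.support) :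
    ∃ k ∈ chargedIndices ν δ, |y - k * δ| ≤ 2 * δ := by
  by_contra! hfar
  refine (Measure.mem_support_iff_forall y |>.1 hy _ (Metric.closedBall_mem_nhds y hδ)).ne' ?_
  refine measure_mono_null (t := ⋃ k ∈ {k : ℤ | |y - k * δ| ≤ 2 * δ}, meshCube1 δ k) ?_ ?_
  · intro z hz
    obtain ⟨hlo, hhi⟩ := abs_le.1 (Real.dist_eq z y ▸ Metric.mem_closedBall.1 hz)
    obtain ⟨hz, hz'⟩ := mem_meshCube1_floor hδ z
    have hnear : |y - ⌊z / δ⌋ * δ| ≤ 2 * δ := abs_le.2 ⟨by linarith, by linarith⟩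
    exact mem_iUnion₂.2 ⟨⌊z / δ⌋, hnear, hz, hz'⟩
  · refine (measure_biUnion_null_iff (Set.to_countable _)).2 fun k hk => ?_
    by_contra hne
    exact (hfar k hne).not_ge hk

lemma exists_isBallCover {α : Type*} [PseudoMetricSpace α] {Y : Set α} (hY : TotallyBounded Y)
    (hr : 0 < r) : ∃ F, IsBallCover Y r F := by
  obtain ⟨t, ht, hYt⟩ := Metric.totallyBounded_iff.1 hY r hr
  refine ⟨ht.toFinset, fun y hy => ?_⟩
  obtain ⟨z, hz, hyz⟩ := mem_iUnion₂.1 (hYt hy)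
  exact ⟨z, ht.mem_toFinset.2 hz, (Metric.mem_ball.1 hyz).le⟩

lemma finite_chargedIndices (hν : IsCompact ν.support) (hδ : 0 < δ) :
    (chargedIndices ν δ).Finite := by
  obtain ⟨F, hF⟩ := exists_isBallCover hν.totallyBounded hδ
  exact (Finset.finite_toSet _).subset (chargedIndices_subset hδ hF)

lemma Dq1_zero_eq_ncard (hν : IsCompact ν.support) (hδ : 0 < δ) :
    Dq1 ν δ 0 = (chargedIndices ν δ).ncard := by
  have hfin := finite_chargedIndices hν hδ
  have hterm : ∀ k, (if ν (meshCube1 δ k) = 0 then (0 : ℝ)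
      else (ν (meshCube1 δ k)).toReal ^ (0 : ℝ)) = (chargedIndices ν δ).indicator 1 k := by
    intro k
    by_cases hk : ν (meshCube1 δ k) = 0 <;> simp [chargedIndices, hk]
  rw [Dq1, tsum_congr hterm, tsum_eq_sum (s := hfin.toFinset), Set.ncard_eq_toFinset_card _ hfin,
    Finset.card_eq_sum_ones, Nat.cast_sum]
  · exact Finset.sum_congr rfl fun k hk => by
      simp [indicator_of_mem (hfin.mem_toFinset.1 hk)]
  · exact fun k hk => indicator_of_notMem (fun h => hk (hfin.mem_toFinset.2 h)) _

lemma Dq1_zero_pos (hν : IsCompact ν.support) (hν0 : ν ≠ 0) (hδ : 0 < δ) : 0 < Dq1 ν δ 0 := by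
  obtain ⟨y, hy⟩ := Measure.nonempty_support hν0
  obtain ⟨k, hk, -⟩ := exists_charged_near hδ hy
  rw [Dq1_zero_eq_ncard hν hδ]
  exact mod_cast (Set.ncard_pos (finite_chargedIndices hν hδ)).2 ⟨k, hk⟩

lemma Dq1_zero_le_card_cover (hν : IsCompact ν.support) (hδ : 0 < δ) {F : Finset ℝ}
    (hF : IsBallCover ν.support δ F) : Dq1 ν δ 0 ≤ 5 * F.card := by
  rw [Dq1_zero_eq_ncard hν hδ]
  have h := (Set.ncard_le_ncard (chargedIndices_subset hδ hF)).trans_eq (Set.ncard_coe_finset _)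
  have h5 := h.trans (Finset.card_biUnion_le_card_mul _ _ 5 fun z _ => (card_nearIndices δ z).le)
  exact mod_cast h5.trans_eq (mul_comm _ _)

lemma exists_cover_card_le_Dq1_zero (hν : IsCompact ν.support) (hδ : 0 < δ) :
    ∃ F, IsBallCover ν.support (2 * δ) F ∧ F.card ≤ Dq1 ν δ 0 := by
  have hfin := finite_chargedIndices hν hδ
  refine ⟨hfin.toFinset.image fun k : ℤ => k * δ, fun y hy => ?_, ?_⟩
  · obtain ⟨k, hk, hyk⟩ := exists_charged_near hδ hy
    exact ⟨_, Finset.mem_image_of_mem _ (hfin.mem_toFinset.2 hk), hyk⟩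
  · rw [Dq1_zero_eq_ncard hν hδ, Set.ncard_eq_toFinset_card _ hfin]
    exact mod_cast Finset.card_image_le

lemma HasLq1.hasCoveringExponent_support (h : HasLq1 ν 0 s) (hν : IsCompact ν.support)
    (hν0 : ν ≠ 0) : HasCoveringExponent ν.support s := by
  intro ε hε
  have hbounds := eventually_rpow_le_of_tendsto_log_div h
    (eventually_nhdsWithin_of_forall fun _ hδ => Dq1_zero_pos hν hν0 hδ) hε
  have hhalf : Tendsto (fun r : ℝ => r / 2) (𝓝[>] 0) (𝓝[>] 0) := by
    refine tendsto_nhdsWithin_iff.2 ⟨?_, ?_⟩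
    · exact ((continuous_id.div_const 2).tendsto' _ _ (zero_div 2)).mono_left nhdsWithin_le_nhds
    · filter_upwards [self_mem_nhdsWithin] with r hr using half_pos (mem_Ioi.1 hr)
  constructor
  · refine ⟨2 ^ (s + ε), by positivity, ?_⟩
    filter_upwards [hhalf.eventually hbounds, self_mem_nhdsWithin] with r ⟨_, hle⟩ hr
    obtain ⟨F, hF, hFcard⟩ := exists_cover_card_le_Dq1_zero hν (half_pos hr)
    refine ⟨F, by rwa [mul_div_cancel₀ r two_ne_zero] at hF, (hFcard.trans hle).trans_eq ?_⟩
    rw [Real.div_rpow (le_of_lt hr) zero_le_two, Real.rpow_neg zero_le_two, div_inv_eq_mul,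
      mul_comm]
  · refine ⟨1 / 5, by positivity, ?_⟩
    filter_upwards [hbounds, self_mem_nhdsWithin] with r ⟨hge, _⟩ hr F hF
    linarith [hge.trans (Dq1_zero_le_card_cover hν hr hF)]

/-- A finite family of intervals of radius `r` with disjoint interiors in the unit interval, all
of which meet `Y`; `P` is the set of their centres. -/
structure IsLinePacking (Y : Set ℝ) (r : ℝ) (P : Finset ℝ) : Prop where
  inside : ∀ z ∈ P, Metric.ball z r ⊆ Ioo 0 1
  meets : ∀ z ∈ P, (Y ∩ Metric.closedBall z r).Nonempty
  disjoint : (P : Set ℝ).PairwiseDisjoint fun z => Metric.ball z r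

variable {Y : Set ℝ}

lemma exists_isBallCover_mem_Icc (hY : Y ⊆ Icc 0 1) (hr : 0 < r) (hr' : r ≤ 1 / 2) :
    ∃ F, IsBallCover Y r F ∧ ∀ z ∈ F, z ∈ Icc r (1 - r) := by
  obtain ⟨F, hF⟩ := exists_isBallCover (isCompact_Icc.totallyBounded.subset hY) hr
  refine ⟨F.image fun z => max r (min z (1 - r)), fun y hy => ?_, fun z hz => ?_⟩
  · obtain ⟨z, hz, hyz⟩ := hF y hy
    refine ⟨_, Finset.mem_image_of_mem _ hz, ?_⟩
    obtain ⟨hy0, hy1⟩ := hY hy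
    rw [Real.dist_eq, abs_le] at *
    grind
  · obtain ⟨z, -, rfl⟩ := Finset.mem_image.1 hz
    exact ⟨le_max_left _ _, max_le (by linarith) (min_le_right _ _)⟩

lemma exists_isLinePacking_isBallCover (hY : Y ⊆ Icc 0 1) (hr : 0 < r) (hr' : r ≤ 1 / 2) :
    ∃ P, IsLinePacking Y r P ∧ IsBallCover Y (5 * r) P := by
  obtain ⟨F, hF, hFr⟩ := exists_isBallCover_mem_Icc hY hr hr'
  let t : Finset ℝ := {z ∈ F | (Y ∩ Metric.closedBall z r).Nonempty}
  obtain ⟨u, hut, hdisj, hcover⟩ := Vitali.exists_disjoint_subfamily_covering_enlargement_closedBall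
    (t : Set ℝ) id (fun _ => r) r (fun _ _ => le_rfl) 5 (by norm_num)
  lift u to Finset ℝ using t.finite_toSet.subset hut
  have hu : ∀ z ∈ u, z ∈ F ∧ (Y ∩ Metric.closedBall z r).Nonempty := fun z hz =>
    Finset.mem_filter.1 (hut hz)
  refine ⟨u, ⟨fun z hz => ?_, fun z hz => (hu z hz).2, fun z hz z' hz' hne => ?_⟩, fun y hy => ?_⟩
  · obtain ⟨h0, h1⟩ := hFr z (hu z hz).1
    rw [Real.ball_eq_Ioo]
    exact Ioo_subset_Ioo (by linarith) (by linarith)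
  · exact (hdisj hz hz' hne).mono Metric.ball_subset_closedBall Metric.ball_subset_closedBall
  · obtain ⟨z, hz, hyz⟩ := hF y hy
    obtain ⟨w, hw, hsub⟩ := hcover z (Finset.mem_filter.2 ⟨hz, y, hy, hyz⟩)
    exact ⟨w, hw, hsub hyz⟩

lemma CoveringLowerBound.exists_isLinePacking (h : CoveringLowerBound Y s) (hY : Y ⊆ Icc 0 1)
    (hne : Y.Nonempty) :
    ∃ c > 0, ∀ r, 0 < r → r ≤ 1 / 2 → ∃ P, IsLinePacking Y r P ∧ c * r ^ (-s) ≤ P.card := by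
  obtain ⟨c, hc, hle⟩ := h.exists_forall_le hne (5 / 2)
  refine ⟨c * 5 ^ (-s), by positivity, fun r hr hr' => ?_⟩
  obtain ⟨P, hP, hcover⟩ := exists_isLinePacking_isBallCover hY hr hr'
  refine ⟨P, hP, ?_⟩
  rw [mul_assoc, ← Real.mul_rpow (by norm_num) hr.le]
  exact hle (5 * r) (by positivity) (by linarith) P hcover

end Line

section Plane

open Topology BoxLikeGIFS

/-- The coordinates of a point of the plane, indexed as the blocks of `Gmat`: `false` is the first
one and `true` the second. -/
def coord (i : Bool) (z : ℝ × ℝ) : ℝ := if i then z.2 else z.1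

/-- The point with `i`-th coordinate `x` and other coordinate `y`. -/
def mkPt (i : Bool) (x y : ℝ) : ℝ × ℝ := if i then (y, x) else (x, y)

@[simp] lemma coord_mkPt_self (i : Bool) (x y : ℝ) : coord i (mkPt i x y) = x := by
  cases i <;> rfl

@[simp] lemma coord_mkPt_not (i : Bool) (x y : ℝ) : coord (!i) (mkPt i x y) = y := by
  cases i <;> rfl

lemma forall_bool_iff_and_not (i : Bool) {P : Bool → Prop} : (∀ j, P j) ↔ P i ∧ P (!i) := by
  cases i <;> simp [Bool.forall_bool, and_comm]

lemma continuous_coord (i : Bool) : Continuous (coord i) := by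
  cases i
  exacts [continuous_fst, continuous_snd]

lemma dist_le_iff_coord {x y : ℝ × ℝ} {r : ℝ} :
    dist x y ≤ r ↔ ∀ i, |coord i x - coord i y| ≤ r := by
  simp [Prod.dist_eq, Bool.forall_bool, coord, Real.dist_eq]

lemma mem_unitSq_iff_coord {z : ℝ × ℝ} : z ∈ unitSq ↔ ∀ i, coord i z ∈ Ioo 0 1 := by
  simp [unitSq, Bool.forall_bool, coord]

lemma mem_Icc_iff_coord {z : ℝ × ℝ} : z ∈ Icc 0 1 ↔ ∀ i, coord i z ∈ Icc 0 1 := by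
  simp only [mem_Icc, Prod.le_def, Bool.forall_bool, coord]
  tauto

/-- The open box with centre `z` and half side lengths `δ`. -/
def openBox (z : ℝ × ℝ) (δ : Bool → ℝ) : Set (ℝ × ℝ) := {w | ∀ i, |coord i w - coord i z| < δ i}

/-- The closed box with centre `z` and half side lengths `δ`. -/
def closedBox (z : ℝ × ℝ) (δ : Bool → ℝ) : Set (ℝ × ℝ) := {w | ∀ i, |coord i w - coord i z| ≤ δ i}

/-- The boxes with half side lengths `δ` centred at the points of `F` cover `X`. -/
def IsBoxCover (X : Set (ℝ × ℝ)) (δ : Bool → ℝ) (F : Finset (ℝ × ℝ)) : Prop :=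
  ∀ x ∈ X, ∃ z ∈ F, x ∈ closedBox z δ

/-- A finite family of boxes of half side lengths `δ` with disjoint interiors in the unit square,
all of which meet `X`; `P` is the set of their centres. -/
structure IsPacking (X : Set (ℝ × ℝ)) (δ : Bool → ℝ) (P : Finset (ℝ × ℝ)) : Prop where
  inside : ∀ z ∈ P, openBox z δ ⊆ unitSq
  meets : ∀ z ∈ P, (X ∩ closedBox z δ).Nonempty
  disjoint : (P : Set (ℝ × ℝ)).PairwiseDisjoint fun z => openBox z δ

/-- `X` is covered by at most `c` boxes of half side lengths `δ`. -/
def CoverableBy (X : Set (ℝ × ℝ)) (δ : Bool → ℝ) (c : ℝ) : Prop :=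
  ∃ F, IsBoxCover X δ F ∧ (F.card : ℝ) ≤ c

/-- `X` has a packing by at least `c` boxes of half side lengths `δ`. -/
def PackableBy (X : Set (ℝ × ℝ)) (δ : Bool → ℝ) (c : ℝ) : Prop :=
  ∃ P, IsPacking X δ P ∧ c ≤ P.card

variable {X : Set (ℝ × ℝ)} {δ : Bool → ℝ} {i : Bool} {r s c : ℝ} {y z : ℝ × ℝ}
  {F P : Finset (ℝ × ℝ)}

lemma isBoxCover_const_iff : IsBoxCover X (fun _ => r) F ↔ IsBallCover X r F := by
  simp only [IsBoxCover, IsBallCover, dist_le_iff_coord]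
  rfl

lemma CoverableBy.mono {c' : ℝ} (h : CoverableBy X δ c) (hc : c ≤ c') : CoverableBy X δ c' :=
  let ⟨F, hF, hFcard⟩ := h
  ⟨F, hF, hFcard.trans hc⟩

lemma PackableBy.mono {c' : ℝ} (h : PackableBy X δ c) (hc : c' ≤ c) : PackableBy X δ c' :=
  let ⟨P, hP, hPcard⟩ := h
  ⟨P, hP, hc.trans hPcard⟩

/-- The index of a mesh square of side `r` containing `z`. -/
noncomputable def meshIndex (r : ℝ) (z : ℝ × ℝ) : ℤ × ℤ := (⌊z.1 / r⌋, ⌊z.2 / r⌋)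

/-- Indices of the mesh squares of side `r` that a ball of radius `r` around `z` can meet. -/
noncomputable def nearSquares (r : ℝ) (z : ℝ × ℝ) : Finset (ℤ × ℤ) :=
  nearIndices r z.1 ×ˢ nearIndices r z.2

lemma card_nearSquares (r : ℝ) (z : ℝ × ℝ) : (nearSquares r z).card = 25 := by
  rw [nearSquares, Finset.card_product, card_nearIndices, card_nearIndices]

lemma mem_meshCube2_meshIndex (hr : 0 < r) (z : ℝ × ℝ) : z ∈ meshCube2 r (meshIndex r z) :=
  ⟨mem_meshCube1_floor hr z.1, mem_meshCube1_floor hr z.2⟩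

lemma mem_nearSquares_of_mem_meshCube2 (hr : 0 < r) {k : ℤ × ℤ} (hy : y ∈ meshCube2 r k)
    (hyz : dist y z ≤ r) : k ∈ nearSquares r z := by
  obtain ⟨hyz₁, hyz₂⟩ := max_le_iff.1 (Prod.dist_eq (x := y) ▸ hyz)
  exact Finset.mk_mem_product (mem_nearIndices_of_mem_meshCube1 hr hy.1 hyz₁)
    (mem_nearIndices_of_mem_meshCube1 hr hy.2 hyz₂)

lemma card_biUnion_nearSquares_le (r : ℝ) (F : Finset (ℝ × ℝ)) :
    (F.biUnion (nearSquares r)).card ≤ 25 * F.card :=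
  (Finset.card_biUnion_le_card_mul _ _ 25 fun z _ => (card_nearSquares r z).le).trans_eq
    (mul_comm _ _)

lemma setOf_meshCube2_subset (hr : 0 < r) (hF : IsBallCover X r F) :
    {k | (X ∩ meshCube2 r k).Nonempty} ⊆ (F.biUnion (nearSquares r) : Finset (ℤ × ℤ)) := by
  rintro k ⟨x, hx, hxk⟩
  obtain ⟨z, hz, hxz⟩ := hF x hx
  exact Finset.mem_biUnion.2 ⟨z, hz, mem_nearSquares_of_mem_meshCube2 hr hxk hxz⟩

lemma IsBallCover.boxCount_le (hr : 0 < r) (hF : IsBallCover X r F) :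
    boxCount X r ≤ 25 * F.card :=
  ((Set.ncard_le_ncard (setOf_meshCube2_subset hr hF)).trans_eq (Set.ncard_coe_finset _)).trans
    (card_biUnion_nearSquares_le r F)

lemma dist_corner_le {k : ℤ × ℤ} (hz : z ∈ meshCube2 r k) : dist z (k.1 * r, k.2 * r) ≤ r := by
  obtain ⟨⟨h1, h2⟩, h3, h4⟩ := hz
  refine max_le ?_ ?_ <;> rw [Real.dist_eq, abs_le] <;> constructor <;> linarith

lemma IsBallCover.exists_card_le_boxCount (hr : 0 < r) (hF : IsBallCover X r F) :
    ∃ G, IsBallCover X r G ∧ G.card ≤ boxCount X r := by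
  have hfin := (Finset.finite_toSet _).subset (setOf_meshCube2_subset hr hF)
  refine ⟨hfin.toFinset.image fun k => (k.1 * r, k.2 * r), fun x hx => ?_, ?_⟩
  · have hmem := mem_meshCube2_meshIndex hr x
    exact ⟨_, Finset.mem_image_of_mem _ (hfin.mem_toFinset.2 ⟨x, hx, hmem⟩), dist_corner_le hmem⟩
  · rw [boxCount, Set.ncard_eq_toFinset_card _ hfin]
    exact Finset.card_image_le

lemma HasCoveringExponent.hasBoxDim (h : HasCoveringExponent X s) : HasBoxDim X s := by
  refine tendsto_log_div_of_rpow_bounds (fun ε hε => ?_) (fun ε hε => ?_)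
  · obtain ⟨_, _, hupper⟩ := (h ε hε).1
    obtain ⟨c, hc, hlower⟩ := (h ε hε).2
    refine ⟨c, hc, ?_⟩
    filter_upwards [hupper, hlower, self_mem_nhdsWithin] with r ⟨F, hF, _⟩ hle hr
    obtain ⟨G, hG, hGcard⟩ := hF.exists_card_le_boxCount hr
    exact (hle G hG).trans (mod_cast hGcard)
  · obtain ⟨C, hC, hupper⟩ := (h ε hε).1
    refine ⟨25 * C, by positivity, ?_⟩
    filter_upwards [hupper, self_mem_nhdsWithin] with r ⟨F, hF, hFcard⟩ hr
    calc (boxCount X r : ℝ) ≤ 25 * F.card := mod_cast hF.boxCount_le hr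
      _ ≤ 25 * C * r ^ (-(s + ε)) := by rw [mul_assoc]; gcongr

lemma IsPacking.injOn_meshIndex (hr : 0 < r) (hP : IsPacking X (fun _ => r) P) :
    InjOn (meshIndex (2 * r)) P := by
  intro z hz z' hz' heq
  by_contra hne
  have hclose : ∀ i, |coord i z - coord i z'| < 2 * r := by
    have hfloor {x y : ℝ} (h : ⌊x / (2 * r)⌋ = ⌊y / (2 * r)⌋) : |x - y| < 2 * r := by
      have := Int.abs_sub_lt_one_of_floor_eq_floor h
      rwa [← sub_div, abs_div, abs_of_pos (by positivity : 0 < 2 * r),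
        div_lt_one (by positivity)] at this
    exact Bool.forall_bool.2 ⟨hfloor (congrArg Prod.fst heq), hfloor (congrArg Prod.snd heq)⟩
  let m : ℝ × ℝ := ((z.1 + z'.1) / 2, (z.2 + z'.2) / 2)
  have hm : ∀ i, coord i m = (coord i z + coord i z') / 2 := Bool.forall_bool.2 ⟨rfl, rfl⟩
  refine Set.disjoint_left.1 (hP.disjoint hz hz' hne) (?_ : m ∈ _) ?_ <;>
  · intro i
    obtain ⟨hlo, hhi⟩ := abs_lt.1 (hclose i)
    rw [hm, abs_lt]
    constructor <;> linarith

lemma IsPacking.card_le_card_cover (hr : 0 < r) (hP : IsPacking X (fun _ => r) P)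
    (hF : IsBallCover X r F) : P.card ≤ 25 * F.card := by
  rw [← Finset.card_image_of_injOn (hP.injOn_meshIndex hr)]
  refine (Finset.card_le_card fun k hk => ?_).trans (card_biUnion_nearSquares_le (2 * r) F)
  obtain ⟨z, hz, rfl⟩ := Finset.mem_image.1 hk
  obtain ⟨x, hx, hxz⟩ := hP.meets z hz
  obtain ⟨w, hw, hxw⟩ := hF x hx
  refine Finset.mem_biUnion.2 ⟨w, hw, mem_nearSquares_of_mem_meshCube2 (by positivity)
    (mem_meshCube2_meshIndex (by positivity) z) ?_⟩
  linarith [dist_triangle_left z w x, dist_le_iff_coord.2 hxz]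

lemma CoverableBy.of_coord (hX : X ⊆ Icc 0 1) (hδ : 1 ≤ δ (!i)) {F : Finset ℝ}
    (hF : IsBallCover (coord i '' X) (δ i) F) : CoverableBy X δ F.card := by
  refine ⟨F.image fun x => mkPt i x 0, fun w hw => ?_, mod_cast Finset.card_image_le⟩
  obtain ⟨x, hx, hwx⟩ := hF _ (mem_image_of_mem _ hw)
  refine ⟨_, Finset.mem_image_of_mem _ hx, (forall_bool_iff_and_not i).2 ⟨?_, ?_⟩⟩
  · rwa [coord_mkPt_self, ← Real.dist_eq]
  · obtain ⟨h0, h1⟩ := mem_Icc_iff_coord.1 (hX hw) (!i)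
    rw [coord_mkPt_not, sub_zero, abs_of_nonneg h0]
    exact h1.trans hδ

lemma IsLinePacking.packableBy (hX : X ⊆ Icc 0 1) (h0 : 0 ≤ δ (!i)) (h1 : δ (!i) ≤ 1 / 2)
    {P : Finset ℝ} (hP : IsLinePacking (coord i '' X) (δ i) P) : PackableBy X δ P.card := by
  have hcentre : ∀ x ∈ P, ∃ y ∈ Icc (δ !i) (1 - δ !i), (X ∩ closedBox (mkPt i x y) δ).Nonempty := by
    intro x hx
    obtain ⟨_, ⟨w, hw, rfl⟩, hwx⟩ := hP.meets x hx
    obtain ⟨hw0, hw1⟩ := mem_Icc_iff_coord.1 (hX hw) (!i)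
    refine ⟨max (δ !i) (min (coord (!i) w) (1 - δ !i)),
      ⟨le_max_left _ _, max_le (by linarith) (min_le_right _ _)⟩, w, hw,
      (forall_bool_iff_and_not i).2 ⟨?_, ?_⟩⟩
    · rwa [coord_mkPt_self, ← Real.dist_eq]
    · rw [coord_mkPt_not, abs_le]
      grind
  choose! y hy hmeets using hcentre
  let Q := P.image fun x => mkPt i x (y x)
  have hQ {w x} (hw : w ∈ openBox (mkPt i x (y x)) δ) : coord i w ∈ Metric.ball x (δ i) := by
    simpa [Real.dist_eq] using hw i
  have hinj : Function.Injective fun x => mkPt i x (y x) := fun x x' h => by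
    simpa using congrArg (coord i) h
  refine ⟨Q, ⟨?_, ?_, ?_⟩, (congrArg Nat.cast (Finset.card_image_of_injective P hinj)).ge⟩
  · refine Finset.forall_mem_image.2 fun x hx w hw => mem_unitSq_iff_coord.2 ?_
    refine (forall_bool_iff_and_not i).2 ⟨hP.inside x hx (hQ hw), ?_⟩
    have hwy := abs_lt.1 (hw (!i))
    rw [coord_mkPt_not] at hwy
    exact ⟨by linarith [hwy.1, (hy x hx).1], by linarith [hwy.2, (hy x hx).2]⟩
  · exact Finset.forall_mem_image.2 hmeets
  · rw [Finset.coe_image]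
    rintro _ ⟨x, hx, rfl⟩ _ ⟨x', hx', rfl⟩ hne
    exact Set.disjoint_left.2 fun w hw hw' =>
      Set.disjoint_left.1 (hP.disjoint hx hx' fun h => hne (h ▸ rfl)) (hQ hw) (hQ hw')

lemma mem_openBox_self (hδ : ∀ i, 0 < δ i) (z : ℝ × ℝ) : z ∈ openBox z δ := fun i => by
  simpa using hδ i

lemma IsPacking.mono {Y : Set (ℝ × ℝ)} (hP : IsPacking X δ P) (hXY : X ⊆ Y) : IsPacking Y δ P :=
  ⟨hP.inside, fun z hz => (hP.meets z hz).mono (inter_subset_inter_left _ hXY), hP.disjoint⟩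

lemma IsPacking.biUnion {κ : Type*} {s : Finset κ} {Q : κ → Finset (ℝ × ℝ)}
    {U : κ → Set (ℝ × ℝ)} (hδ : ∀ i, 0 < δ i) (hQ : ∀ k ∈ s, IsPacking X δ (Q k))
    (hU : ∀ k ∈ s, ∀ z ∈ Q k, openBox z δ ⊆ U k) (hdisj : (s : Set κ).PairwiseDisjoint U) :
    IsPacking X δ (s.biUnion Q) ∧ (s.biUnion Q).card = ∑ k ∈ s, (Q k).card := by
  have hboxes {k k'} (hk : k ∈ s) (hk' : k' ∈ s) (hne : k ≠ k') {z z'} (hz : z ∈ Q k)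
      (hz' : z' ∈ Q k') : Disjoint (openBox z δ) (openBox z' δ) :=
    (hdisj hk hk' hne).mono (hU k hk z hz) (hU k' hk' z' hz')
  refine ⟨⟨fun z hz => ?_, fun z hz => ?_, fun z hz z' hz' hne => ?_⟩,
    Finset.card_biUnion fun k hk k' hk' hne => Finset.disjoint_left.2 fun z hz hz' => ?_⟩
  · obtain ⟨k, hk, hz⟩ := Finset.mem_biUnion.1 hz
    exact (hQ k hk).inside z hz
  · obtain ⟨k, hk, hz⟩ := Finset.mem_biUnion.1 hz
    exact (hQ k hk).meets z hz
  · obtain ⟨k, hk, hz⟩ := Finset.mem_biUnion.1 hz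
    obtain ⟨k', hk', hz'⟩ := Finset.mem_biUnion.1 hz'
    obtain rfl | hkk := eq_or_ne k k'
    exacts [(hQ k hk).disjoint hz hz' hne, hboxes hk hk' hkk hz hz']
  · exact Set.disjoint_left.1 (hboxes hk hk' hne hz hz') (mem_openBox_self hδ z)
      (mem_openBox_self hδ z)

end Plane

namespace BoxLikeGIFS

variable {V E : Type*} (S : BoxLikeGIFS V E)

/-- The contraction ratio of `ψ_e` onto the `i`-th axis. -/
def len (i : Bool) (e : E) : ℝ := if i then S.b e else S.a e

/-- The sign of `ψ_e` onto the `i`-th axis. -/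
def sgn (i : Bool) (e : E) : ℝ := if i then S.sb e else S.sa e

/-- The axis mapped by `T_e` to the `i`-th axis. -/
def turn (e : E) (i : Bool) : Bool := if S.diag e then i else !i

/-- The half side lengths of the preimage under `ψ_e` of a box with half side lengths `δ`. -/
noncomputable def rescale (e : E) (δ : Bool → ℝ) : Bool → ℝ :=
  fun j => δ (S.turn e j) / S.len (S.turn e j) e

/-- The affine map of the line by which `ψ_e` acts from the axis `turn e i` to the axis `i`. -/
def axisMap (i : Bool) (e : E) (x : ℝ) : ℝ := S.sgn i e * S.len i e * x + coord i (S.trans e)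

/-- All contraction ratios lie in `[lo, hi] ⊆ (0, 1)`. -/
structure LenBounds (lo hi : ℝ) : Prop where
  lo_pos : 0 < lo
  lo_lt_one : lo < 1
  hi_pos : 0 < hi
  hi_lt_one : hi < 1
  len_mem : ∀ i e, S.len i e ∈ Icc lo hi

section Maps

@[simp] lemma turn_turn (e : E) (i : Bool) : S.turn e (S.turn e i) = i := by
  unfold turn
  split_ifs <;> simp

@[simp] lemma turn_not (e : E) (i : Bool) : S.turn e (!i) = !(S.turn e i) := by
  unfold turn
  split_ifs <;> simp

@[simp] lemma rescale_turn (e : E) (δ : Bool → ℝ) (i : Bool) :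
    S.rescale e δ (S.turn e i) = δ i / S.len i e := by
  simp [rescale]

lemma forall_turn_iff (e : E) {P : Bool → Prop} : (∀ i, P (S.turn e i)) ↔ ∀ j, P j :=
  ⟨fun h j => by simpa using h (S.turn e j), fun h i => h _⟩

lemma len_mem_Ioo (i : Bool) (e : E) : S.len i e ∈ Ioo 0 1 := by
  cases i
  exacts [S.a_mem e, S.b_mem e]

lemma len_pos (i : Bool) (e : E) : 0 < S.len i e := (S.len_mem_Ioo i e).1

lemma exists_lenBounds [Finite E] : ∃ lo hi, S.LenBounds lo hi := by
  rcases isEmpty_or_nonempty E with _ | _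
  · exact ⟨1 / 2, 1 / 2, by norm_num, by norm_num, by norm_num, by norm_num, fun _ => isEmptyElim⟩
  obtain ⟨j, hj⟩ := Finite.exists_min (fun x : Bool × E => S.len x.1 x.2)
  obtain ⟨k, hk⟩ := Finite.exists_max (fun x : Bool × E => S.len x.1 x.2)
  have hj' := S.len_mem_Ioo j.1 j.2
  have hk' := S.len_mem_Ioo k.1 k.2
  exact ⟨_, _, hj'.1, hj'.2, hk'.1, hk'.2, fun i e => ⟨hj (i, e), hk (i, e)⟩⟩

lemma abs_sgn (i : Bool) (e : E) : |S.sgn i e| = 1 := by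
  cases i
  · rcases S.sa_mem e with h | h <;> simp [sgn, h]
  · rcases S.sb_mem e with h | h <;> simp [sgn, h]

lemma sgn_ne_zero (i : Bool) (e : E) : S.sgn i e ≠ 0 :=
  abs_pos.1 ((S.abs_sgn i e).symm ▸ one_pos)

lemma coord_map (i : Bool) (e : E) (z : ℝ × ℝ) :
    coord i (S.map e z) = S.axisMap i e (coord (S.turn e i) z) := by
  unfold map turn
  cases i <;> by_cases h : S.diag e = true <;> simp [h, coord, sgn, len, axisMap]

lemma dist_axisMap (i : Bool) (e : E) (x y : ℝ) :
    dist (S.axisMap i e x) (S.axisMap i e y) = S.len i e * dist x y := by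
  simp only [axisMap, Real.dist_eq, add_sub_add_right_eq_sub, ← mul_sub, abs_mul, abs_sgn, one_mul,
    abs_of_pos (S.len_pos i e)]

lemma axisMap_surjective (i : Bool) (e : E) : Function.Surjective (S.axisMap i e) := fun y =>
  ⟨(y - coord i (S.trans e)) / (S.sgn i e * S.len i e), by
    rw [axisMap, mul_div_cancel₀ _ (mul_ne_zero (S.sgn_ne_zero i e) (S.len_pos i e).ne'),
      sub_add_cancel]⟩

lemma antilipschitzWith_axisMap (i : Bool) (e : E) :
    AntilipschitzWith (S.len i e)⁻¹.toNNReal (S.axisMap i e) := by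
  refine AntilipschitzWith.of_le_mul_dist fun x y => ?_
  have hlen := S.len_pos i e
  rw [dist_axisMap, Real.coe_toNNReal _ (inv_nonneg.2 hlen.le), inv_mul_cancel_left₀ hlen.ne']

lemma abs_coord_map_sub (i : Bool) (e : E) (z w : ℝ × ℝ) :
    |coord i (S.map e z) - coord i (S.map e w)| =
      S.len i e * |coord (S.turn e i) z - coord (S.turn e i) w| := by
  rw [coord_map, coord_map, ← Real.dist_eq, dist_axisMap, Real.dist_eq]

lemma continuous_map (e : E) : Continuous (S.map e) := by
  unfold map
  split_ifs <;> fun_prop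

lemma map_surjective (e : E) : Function.Surjective (S.map e) := by
  intro w
  choose x hx using fun j => S.axisMap_surjective (S.turn e j) e (coord (S.turn e j) w)
  have hcoord : ∀ j, coord j (x false, x true) = x j := Bool.forall_bool.2 ⟨rfl, rfl⟩
  refine ⟨(x false, x true), dist_le_zero.1 (dist_le_iff_coord.2 fun i => ?_)⟩
  have hxi := hx (S.turn e i)
  rw [turn_turn] at hxi
  rw [coord_map, hcoord, hxi, sub_self, abs_zero]

lemma map_mem_openBox_iff {e : E} {z w : ℝ × ℝ} {δ : Bool → ℝ} :
    S.map e w ∈ openBox (S.map e z) δ ↔ w ∈ openBox z (S.rescale e δ) := by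
  change _ ↔ ∀ j, |coord j w - coord j z| < S.rescale e δ j
  simp only [openBox, mem_ofPred_eq, ← S.forall_turn_iff e (P := fun j => _ < S.rescale e δ j),
    abs_coord_map_sub, rescale_turn, lt_div_iff₀' (S.len_pos _ e)]

lemma map_mem_closedBox_iff {e : E} {z w : ℝ × ℝ} {δ : Bool → ℝ} :
    S.map e w ∈ closedBox (S.map e z) δ ↔ w ∈ closedBox z (S.rescale e δ) := by
  change _ ↔ ∀ j, |coord j w - coord j z| ≤ S.rescale e δ j
  simp only [closedBox, mem_ofPred_eq, ← S.forall_turn_iff e (P := fun j => _ ≤ S.rescale e δ j),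
    abs_coord_map_sub, rescale_turn, le_div_iff₀' (S.len_pos _ e)]

lemma image_openBox (e : E) (z : ℝ × ℝ) (δ : Bool → ℝ) :
    S.map e '' openBox z (S.rescale e δ) = openBox (S.map e z) δ := by
  rw [← image_preimage_eq (openBox (S.map e z) δ) (S.map_surjective e)]
  congr 1
  ext w
  exact S.map_mem_openBox_iff.symm

lemma antilipschitzWith_map (e : E) :
    AntilipschitzWith (min (S.a e) (S.b e))⁻¹.toNNReal (S.map e) := by
  have hpos : 0 < min (S.a e) (S.b e) := lt_min (S.a_mem e).1 (S.b_mem e).1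
  have hmin : ∀ i, min (S.a e) (S.b e) ≤ S.len i e :=
    Bool.forall_bool.2 ⟨min_le_left _ _, min_le_right _ _⟩
  refine AntilipschitzWith.of_le_mul_dist fun x y => ?_
  rw [Real.coe_toNNReal _ (inv_nonneg.2 hpos.le), dist_le_iff_coord, ← S.forall_turn_iff e]
  intro i
  rw [← div_eq_inv_mul, le_div_iff₀' hpos]
  calc min (S.a e) (S.b e) * |coord (S.turn e i) x - coord (S.turn e i) y|
      ≤ S.len i e * |coord (S.turn e i) x - coord (S.turn e i) y| := by
        gcongr
        exact hmin i
    _ = |coord i (S.map e x) - coord i (S.map e y)| := (S.abs_coord_map_sub i e x y).symm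
    _ ≤ dist (S.map e x) (S.map e y) := dist_le_iff_coord.1 le_rfl i

lemma map_injective (e : E) : Function.Injective (S.map e) := (S.antilipschitzWith_map e).injective

variable {S} {lo hi : ℝ}

lemma LenBounds.dist_map_le (hS : S.LenBounds lo hi) (e : E) (x y : ℝ × ℝ) :
    dist (S.map e x) (S.map e y) ≤ hi * dist x y := by
  refine dist_le_iff_coord.2 fun i => ?_
  rw [abs_coord_map_sub]
  exact mul_le_mul (hS.len_mem i e).2 (dist_le_iff_coord.1 le_rfl _) (abs_nonneg _) hS.hi_pos.le

end Maps

end BoxLikeGIFS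

lemma support_map_eq_image {α β : Type*} [TopologicalSpace α] [MeasurableSpace α]
    [BorelSpace α] [HereditarilyLindelofSpace α] [TopologicalSpace β] [MeasurableSpace β]
    [BorelSpace β] [T2Space β] {ν : Measure α} {f : α → β} (hf : Continuous f)
    (hν : IsCompact ν.support) : (ν.map f).support = f '' ν.support := by
  have hclosed := (hν.image hf).isClosed
  refine Subset.antisymm (Measure.support_subset_of_isClosed hclosed ?_) ?_
  · rw [mem_ae_iff, Measure.map_apply hf.measurable hclosed.measurableSet.compl]
    exact measure_mono_null (fun x hx hxν => hx (mem_image_of_mem f hxν))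
      Measure.measure_compl_support
  · rintro _ ⟨x, hx, rfl⟩
    refine (Measure.mem_support_iff_forall _).2 fun U hU => ?_
    have hpos := (Measure.mem_support_iff_forall x).1 hx _ (hf.continuousAt.preimage_mem_nhds hU)
    exact hpos.trans_le (Measure.le_map_apply hf.aemeasurable U)

namespace BoxLikeGIFS

section Attractor

variable {V E : Type*} {S : BoxLikeGIFS V E} {X : V → Set (ℝ × ℝ)} {δ : Bool → ℝ}
  {lo hi : ℝ} {v : V}

lemma IsGDAttractor.exists_map_eq (hX : S.IsGDAttractor X) {x : ℝ × ℝ} (hx : x ∈ X v) :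
    ∃ e, S.init e = v ∧ ∃ y ∈ X (S.term e), S.map e y = x := by
  rw [hX.2 v] at hx
  simpa using hx

lemma IsGDAttractor.mapsTo_map (hX : S.IsGDAttractor X) (e : E) :
    MapsTo (S.map e) (X (S.term e)) (X (S.init e)) := fun y hy => by
  rw [hX.2 (S.init e)]
  exact mem_iUnion₂.2 ⟨e, rfl, y, hy, rfl⟩

lemma IsGDAttractor.mapsTo_axisMap (hX : S.IsGDAttractor X) (i : Bool) (e : E) :
    MapsTo (S.axisMap i e) (coord (S.turn e i) '' X (S.term e)) (coord i '' X (S.init e)) := by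
  rintro _ ⟨y, hy, rfl⟩
  exact ⟨S.map e y, hX.mapsTo_map e hy, S.coord_map i e y⟩

lemma LenBounds.infDist_map_le (hS : S.LenBounds lo hi) {e : E} {Y Z : Set (ℝ × ℝ)}
    (hYZ : MapsTo (S.map e) Y Z) (hY : Y.Nonempty) (x : ℝ × ℝ) :
    Metric.infDist (S.map e x) Z ≤ hi * Metric.infDist x Y := by
  rw [← div_le_iff₀' hS.hi_pos, Metric.le_infDist hY]
  intro y hy
  rw [div_le_iff₀' hS.hi_pos]
  exact (Metric.infDist_le_dist_of_mem (hYZ hy)).trans (hS.dist_map_le e x y)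

/-- The maximal distance `D` of a point of the attractor from `Y` satisfies `D ≤ hi * D`. -/
lemma IsGDAttractor.subset_of_mapsTo [Finite E] (hX : S.IsGDAttractor X) {Y : V → Set (ℝ × ℝ)}
    (hYc : ∀ v, IsClosed (Y v)) (hYne : ∀ v, (Y v).Nonempty)
    (hY : ∀ e, MapsTo (S.map e) (Y (S.term e)) (Y (S.init e))) (v : V) : X v ⊆ Y v := by
  obtain ⟨lo, hi, hS⟩ := S.exists_lenBounds
  have : Finite V := Finite.of_surjective S.init S.edge_exists
  have : Nonempty V := ⟨v⟩
  choose x hx hmax using fun v => (hX.1 v).2.exists_isMaxOn (hX.1 v).1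
    (Metric.continuous_infDist_pt (Y v)).continuousOn
  obtain ⟨u, hu⟩ := Finite.exists_max fun v => Metric.infDist (x v) (Y v)
  have hle : ∀ v, ∀ y ∈ X v, Metric.infDist y (Y v) ≤ Metric.infDist (x u) (Y u) :=
    fun v y hy => (hmax v hy).trans (hu v)
  have hD : Metric.infDist (x u) (Y u) ≤ hi * Metric.infDist (x u) (Y u) := by
    obtain ⟨e, rfl, y, hy, hyx⟩ := hX.exists_map_eq (hx u)
    calc Metric.infDist (x (S.init e)) (Y (S.init e)) ≤ hi * Metric.infDist y (Y (S.term e)) := by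
          rw [← hyx]
          exact hS.infDist_map_le (hY e) (hYne _) y
      _ ≤ _ := by
          gcongr
          exacts [hS.hi_pos.le, hle _ y hy]
  have hD0 : Metric.infDist (x u) (Y u) ≤ 0 := by
    nlinarith [hS.hi_lt_one]
  intro y hy
  refine ((hYc v).mem_iff_infDist_zero (hYne v)).2 ?_
  exact le_antisymm ((hle v y hy).trans hD0) Metric.infDist_nonneg

lemma ROSC.mapsTo_Icc (h : S.ROSC) (e : E) : MapsTo (S.map e) (Icc 0 1) (Icc 0 1) := by
  have hcl : closure unitSq = Icc (0 : ℝ × ℝ) 1 := by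
    rw [unitSq, closure_prod_eq, closure_Ioo zero_ne_one, Icc_prod_Icc]
    rfl
  rw [← hcl]
  exact (mapsTo_iff_image_subset.2 (h.1 e)).closure (S.continuous_map e)

lemma IsGDAttractor.subset_Icc [Finite E] (hX : S.IsGDAttractor X) (h : S.ROSC) (v : V) :
    X v ⊆ Icc 0 1 :=
  hX.subset_of_mapsTo (fun _ => isClosed_Icc) (fun _ => ⟨0, by simp⟩) h.mapsTo_Icc v

lemma IsGDAttractor.coverableBy_sum [Fintype E] (hX : S.IsGDAttractor X) {c : E → ℝ}
    (hc : ∀ e, S.init e = v → CoverableBy (X (S.term e)) (S.rescale e δ) (c e)) :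
    CoverableBy (X v) δ (∑ e with S.init e = v, c e) := by
  choose! F hF hFcard using hc
  refine ⟨({e | S.init e = v} : Finset E).biUnion fun e => (F e).image (S.map e),
    fun x hx => ?_, ?_⟩
  · obtain ⟨e, he, y, hy, rfl⟩ := hX.exists_map_eq hx
    obtain ⟨z, hz, hyz⟩ := hF e he y hy
    refine ⟨S.map e z, ?_, S.map_mem_closedBox_iff.2 hyz⟩
    exact Finset.mem_biUnion.2 ⟨e, by simpa using he, Finset.mem_image_of_mem _ hz⟩
  · calc (((_ : Finset E).biUnion fun e => (F e).image (S.map e)).card : ℝ)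
        ≤ ∑ e with S.init e = v, ((F e).card : ℝ) := mod_cast Finset.card_biUnion_le.trans
          (Finset.sum_le_sum fun e _ => Finset.card_image_le)
      _ ≤ _ := Finset.sum_le_sum fun e he => hFcard e (by simpa using he)

lemma ROSC.isPacking_image_map (h : S.ROSC) {Y : Set (ℝ × ℝ)} {e : E} {P : Finset (ℝ × ℝ)}
    (hP : IsPacking Y (S.rescale e δ) P) : IsPacking (S.map e '' Y) δ (P.image (S.map e)) where
  inside := Finset.forall_mem_image.2 fun z hz => by
    rw [← image_openBox]
    exact (image_mono (hP.inside z hz)).trans (h.1 e)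
  meets := Finset.forall_mem_image.2 fun z hz => by
    obtain ⟨y, hy, hyz⟩ := hP.meets z hz
    exact ⟨S.map e y, mem_image_of_mem _ hy, S.map_mem_closedBox_iff.2 hyz⟩
  disjoint := by
    rw [Finset.coe_image]
    rintro _ ⟨z, hz, rfl⟩ _ ⟨z', hz', rfl⟩ hne
    simp only [Function.onFun, ← image_openBox]
    exact (disjoint_image_iff (S.map_injective e)).2 (hP.disjoint hz hz' fun h => hne (h ▸ rfl))

lemma IsGDAttractor.packableBy_sum [Fintype E] (hX : S.IsGDAttractor X) (h : S.ROSC)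
    (hδ : ∀ i, 0 < δ i) {c : E → ℝ}
    (hc : ∀ e, S.init e = v → PackableBy (X (S.term e)) (S.rescale e δ) (c e)) :
    PackableBy (X v) δ (∑ e with S.init e = v, c e) := by
  choose! P hP hPcard using hc
  have hinit : ∀ e ∈ ({e | S.init e = v} : Finset E), S.init e = v := by simp
  obtain ⟨hpack, hcard⟩ := IsPacking.biUnion (X := X v) (s := {e | S.init e = v})
    (Q := fun e => (P e).image (S.map e)) (U := fun e => S.map e '' unitSq) hδ
    (fun e he => by
      obtain rfl := hinit e he
      exact (h.isPacking_image_map (hP e rfl)).mono (hX.mapsTo_map e).image_subset)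
    (fun e he => Finset.forall_mem_image.2 fun z hz => by
      rw [← image_openBox]
      exact image_mono ((hP e (hinit e he)).inside z hz))
    (fun e he e' he' hne => h.2 e e' hne ((hinit e he).trans (hinit e' he').symm))
  refine ⟨_, hpack, ?_⟩
  rw [hcard, Nat.cast_sum]
  refine Finset.sum_le_sum fun e he => (hPcard e (hinit e he)).trans_eq ?_
  rw [Finset.card_image_of_injective _ (S.map_injective e)]

end Attractor

section Measures

variable {V E : Type*} [Fintype E] {S : BoxLikeGIFS V E} {X : V → Set (ℝ × ℝ)} {p : E → ℝ}
  {μ : V → Measure (ℝ × ℝ)}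

lemma IsGDMeasure.apply (hμ : S.IsGDMeasure p μ) (v : V) {A : Set (ℝ × ℝ)}
    (hA : MeasurableSet A) :
    μ v A = ∑ e with S.init e = v, ENNReal.ofReal (p e) * μ (S.term e) (S.map e ⁻¹' A) := by
  rw [hμ.2 v, Measure.finsetSum_apply, Finset.sum_filter]
  refine Finset.sum_congr rfl fun e _ => ?_
  split_ifs
  · rw [Measure.smul_apply, Measure.map_apply (S.continuous_map e).measurable hA, smul_eq_mul]
  · simp

lemma IsGDMeasure.mapsTo_support (hμ : S.IsGDMeasure p μ) (hp : S.IsWeights p) (e : E) :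
    MapsTo (S.map e) (μ (S.term e)).support (μ (S.init e)).support := by
  intro x hx
  refine (Measure.mem_support_iff_forall _).2 fun U hU => ?_
  obtain ⟨W, hWU, hW, hxW⟩ := mem_nhds_iff.1 hU
  refine lt_of_lt_of_le ?_ (measure_mono hWU)
  rw [hμ.apply _ hW.measurableSet]
  have hpos : 0 < μ (S.term e) (S.map e ⁻¹' W) := (Measure.mem_support_iff_forall x).1 hx _
    ((S.continuous_map e).continuousAt.preimage_mem_nhds (hW.mem_nhds hxW))
  exact (ENNReal.mul_pos (by simpa using hp.1 e) hpos.ne').trans_le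
    (Finset.single_le_sum (f := fun e => ENNReal.ofReal (p e) * μ (S.term e) (S.map e ⁻¹' W))
      (fun _ _ => zero_le) (by simp))

lemma IsGDMeasure.le_apply (hμ : S.IsGDMeasure p μ) (hp : S.IsWeights p) {v : V}
    {A : Set (ℝ × ℝ)} (hA : MeasurableSet A) {c : ENNReal}
    (h : ∀ e, S.init e = v → c ≤ μ (S.term e) (S.map e ⁻¹' A)) : c ≤ μ v A := by
  have hsum : ∑ e with S.init e = v, ENNReal.ofReal (p e) = 1 := by
    rw [← ENNReal.ofReal_sum_of_nonneg fun e _ => (hp.1 e).le, Finset.sum_filter, hp.2 v,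
      ENNReal.ofReal_one]
  calc c = ∑ e with S.init e = v, ENNReal.ofReal (p e) * c := by
        rw [← Finset.sum_mul, hsum, one_mul]
    _ ≤ ∑ e with S.init e = v, ENNReal.ofReal (p e) * μ (S.term e) (S.map e ⁻¹' A) :=
        Finset.sum_le_sum fun e he => by
          gcongr
          exact h e (by simpa using he)
    _ = μ v A := (hμ.apply v hA).symm

/-- A neighbourhood carrying mass `c` of every `μ_w` can be shrunk by the factor `hi` because
`ψ_e` maps neighbourhoods of `X_{t(e)}` into the shrunken ones of `X_{i(e)}`. -/
lemma IsGDMeasure.le_measure_infDist (hμ : S.IsGDMeasure p μ) (hp : S.IsWeights p)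
    (hX : S.IsGDAttractor X) {lo hi R : ℝ} (hS : S.LenBounds lo hi) {c : ENNReal}
    (hR : ∀ v, c ≤ μ v {z | Metric.infDist z (X v) ≤ R}) (n : ℕ) (v : V) :
    c ≤ μ v {z | Metric.infDist z (X v) ≤ hi ^ n * R} := by
  induction n generalizing v with
  | zero => simpa using hR v
  | succ n ih =>
    have hclosed : IsClosed {z | Metric.infDist z (X v) ≤ hi ^ (n + 1) * R} :=
      isClosed_le (Metric.continuous_infDist_pt _) continuous_const
    refine hμ.le_apply hp hclosed.measurableSet fun e he => (ih (S.term e)).trans ?_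
    subst he
    refine measure_mono fun z hz => (hS.infDist_map_le (hX.mapsTo_map e) (hX.1 _).1 z).trans ?_
    rw [pow_succ', mul_assoc]
    exact mul_le_mul_of_nonneg_left hz hS.hi_pos.le

lemma exists_nat_lt_measure_infDist [Finite V] (hμ : ∀ v, IsProbabilityMeasure (μ v))
    {c : ENNReal} (hc : c < 1) : ∃ N : ℕ, ∀ v, c ≤ μ v {z | Metric.infDist z (X v) ≤ N} := by
  have hlarge : ∀ᶠ n : ℕ in atTop, ∀ v, c ≤ μ v {z | Metric.infDist z (X v) ≤ n} := by
    refine eventually_all.2 fun v => ?_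
    have hmono : Monotone fun n : ℕ => {z | Metric.infDist z (X v) ≤ n} :=
      fun m n hmn => ofPred_subset_ofPred.2 fun z hz =>
        hz.trans (Nat.cast_le.2 hmn)
    have hU : ⋃ n : ℕ, {z | Metric.infDist z (X v) ≤ n} = univ :=
      eq_univ_of_forall fun z => mem_iUnion.2 (exists_nat_ge (Metric.infDist z (X v)))
    have htendsto := tendsto_measure_iUnion_atTop (μ := μ v) hmono
    rw [hU, measure_univ] at htendsto
    exact (htendsto.eventually (lt_mem_nhds hc)).mono fun n hn => hn.le
  exact hlarge.exists

lemma IsGDMeasure.support_subset (hμ : S.IsGDMeasure p μ) (hp : S.IsWeights p)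
    (hX : S.IsGDAttractor X) (v : V) : (μ v).support ⊆ X v := by
  have : Finite V := Finite.of_surjective S.init S.edge_exists
  have := hμ.1
  obtain ⟨lo, hi, hS⟩ := S.exists_lenBounds
  have hball : ∀ r > 0, (μ v).support ⊆ {z | Metric.infDist z (X v) ≤ r} := by
    intro r hr
    have hclosed : IsClosed {z | Metric.infDist z (X v) ≤ r} :=
      isClosed_le (Metric.continuous_infDist_pt _) continuous_const
    refine Measure.support_subset_of_isClosed hclosed ?_
    refine (mem_ae_iff_prob_eq_one hclosed.measurableSet).2 (le_antisymm prob_le_one ?_)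
    refine le_of_forall_lt_imp_le_of_dense fun c hc => ?_
    obtain ⟨N, hN⟩ := exists_nat_lt_measure_infDist (X := X) hμ.1 hc
    have hlim : Tendsto (fun n : ℕ => hi ^ n * (N : ℝ)) atTop (nhds 0) := by
      simpa using
        (tendsto_pow_atTop_nhds_zero_of_lt_one hS.hi_pos.le hS.hi_lt_one).mul_const (N : ℝ)
    obtain ⟨n, hn⟩ := (hlim.eventually (gt_mem_nhds hr)).exists
    exact (hμ.le_measure_infDist hp hX hS hN n v).trans (measure_mono fun z hz => hz.trans hn.le)
  intro x hx
  refine ((hX.1 v).2.isClosed.mem_iff_infDist_zero (hX.1 v).1).2 ?_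
  exact le_antisymm (le_of_forall_pos_le_add fun r hr => by simpa using hball r hr hx)
    Metric.infDist_nonneg

lemma IsGDMeasure.support_eq (hμ : S.IsGDMeasure p μ) (hp : S.IsWeights p)
    (hX : S.IsGDAttractor X) (v : V) : (μ v).support = X v := by
  have := hμ.1
  exact (hμ.support_subset hp hX v).antisymm <|
    hX.subset_of_mapsTo (Y := fun v => (μ v).support) (fun _ => Measure.isClosed_support)
      (fun v => Measure.nonempty_support (IsProbabilityMeasure.ne_zero (μ v)))
      (hμ.mapsTo_support hp) v

lemma IsGDMeasure.hasCoveringExponent_image_coord (hμ : S.IsGDMeasure p μ) (hp : S.IsWeights p)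
    (hX : S.IsGDAttractor X) {v : V} {i : Bool} {s : ℝ} (h : HasLq1 ((μ v).map (coord i)) 0 s) :
    HasCoveringExponent (coord i '' X v) s := by
  have := hμ.1 v
  have hcont := continuous_coord i
  have hsupp : ((μ v).map (coord i)).support = coord i '' X v := by
    rw [support_map_eq_image hcont, hμ.support_eq hp hX v]
    exact (hμ.support_eq hp hX v).symm ▸ (hX.1 v).2
  rw [← hsupp]
  refine h.hasCoveringExponent_support (hsupp ▸ (hX.1 v).2.image hcont) ?_
  have := Measure.isProbabilityMeasure_map (μ := μ v) hcont.aemeasurable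
  exact IsProbabilityMeasure.ne_zero _

end Measures

end BoxLikeGIFS

namespace BoxLikeGIFS

variable {V E : Type*} (S : BoxLikeGIFS V E)

section Transfer

open scoped Matrix

variable {τ : V → Bool → ℝ} {p : E → ℝ} {s γ η : ℝ}

/-- The nonzero entry in the row of index `i` of the block of `e` in `𝒢^{(0)}_{0,s}`, with
`τ v false` and `τ v true` for the spectra `τ_{x,v}(0)` and `τ_{y,v}(0)`. -/
noncomputable def weight (τ : V → Bool → ℝ) (s : ℝ) (i : Bool) (e : E) : ℝ :=
  S.len i e ^ τ (S.term e) (S.turn e i) * S.len (!i) e ^ (s - τ (S.term e) (S.turn e i))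

/-- The operator from functions on `E × Bool` to functions on `V × Bool` whose composition with
the pullback along `e ↦ t(e)` is `𝒢^{(0)}_{0,s}`. -/
noncomputable def transfer [Fintype E] (τ : V → Bool → ℝ) (s : ℝ) (u : E → Bool → ℝ) (v : V)
    (i : Bool) : ℝ :=
  ∑ e with S.init e = v, S.weight τ s i e * u e (S.turn e i)

lemma weight_pos (τ : V → Bool → ℝ) (s : ℝ) (i : Bool) (e : E) : 0 < S.weight τ s i e :=
  mul_pos (Real.rpow_pos_of_pos (S.len_pos _ _) _) (Real.rpow_pos_of_pos (S.len_pos _ _) _)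

lemma weight_add (τ : V → Bool → ℝ) (s s' η : ℝ) (i : Bool) (e : E) :
    S.weight (fun v i => τ v i + η) s' i e =
      S.len i e ^ η * S.len (!i) e ^ (s' - s - η) * S.weight τ s i e := by
  unfold weight
  rw [mul_mul_mul_comm, ← Real.rpow_add (S.len_pos _ _), ← Real.rpow_add (S.len_pos _ _)]
  ring_nf

lemma exists_weight_le_weight_add [Finite E] {t : ℝ} (ht : t < γ) :
    ∃ η > 0, ∀ i e, S.weight τ γ i e ≤ S.weight (fun v i => τ v i + η) (t + 2 * η) i e := by
  have hev : ∀ᶠ η in nhdsWithin (0 : ℝ) (Ioi 0), ∀ i e,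
      1 ≤ S.len i e ^ η * S.len (!i) e ^ (t + 2 * η - γ - η) := by
    refine eventually_all.2 fun i => eventually_all.2 fun e => ?_
    have hcont : Continuous fun η : ℝ => S.len i e ^ η * S.len (!i) e ^ (t + 2 * η - γ - η) :=
      (continuous_const.rpow continuous_id fun _ => Or.inl (S.len_pos i e).ne').mul
        (continuous_const.rpow (by fun_prop) fun _ => Or.inl (S.len_pos (!i) e).ne')
    have hone : 1 < S.len i e ^ (0 : ℝ) * S.len (!i) e ^ (t + 2 * 0 - γ - 0) := by
      rw [Real.rpow_zero, one_mul]
      obtain ⟨h0, h1⟩ := S.len_mem_Ioo (!i) e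
      exact Real.one_lt_rpow_of_pos_of_lt_one_of_neg h0 h1 (by linarith)
    exact (((hcont.tendsto 0).mono_left nhdsWithin_le_nhds).eventually_const_lt hone).mono
      fun _ => le_of_lt
  obtain ⟨η, h, hη⟩ := (hev.and self_mem_nhdsWithin).exists
  refine ⟨η, hη, fun i e => ?_⟩
  rw [S.weight_add τ γ]
  exact le_mul_of_one_le_left (S.weight_pos τ γ i e).le (h i e)

lemma Gmat_apply (e e' : E) (i i' : Bool) :
    S.Gmat p (τ · false) (τ · true) 0 0 s (e, i) (e', i') =
      if S.init e' = S.term e ∧ i' = S.turn e' i then S.weight τ s i e' else 0 := by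
  unfold Gmat weight turn len
  by_cases h : S.init e' = S.term e
  · by_cases hd : S.diag e' = true <;> cases i <;> cases i' <;> simp [h, hd]
  · simp [h, Ne.symm h]

lemma Gmat_nonneg (j j' : E × Bool) : 0 ≤ S.Gmat p (τ · false) (τ · true) 0 0 s j j' := by
  rw [← Prod.mk.eta (p := j), ← Prod.mk.eta (p := j'), Gmat_apply]
  split_ifs
  exacts [(S.weight_pos _ _ _ _).le, le_rfl]

variable [Fintype E]

lemma transfer_mono {u u' : E → Bool → ℝ} (h : u ≤ u') :
    S.transfer τ s u ≤ S.transfer τ s u' := fun _ i =>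
  Finset.sum_le_sum fun e _ => mul_le_mul_of_nonneg_left (h e _) (S.weight_pos τ s i e).le

lemma transfer_pos {u : E → Bool → ℝ} (hu : ∀ e i, 0 < u e i) (v : V) (i : Bool) :
    0 < S.transfer τ s u v i := by
  obtain ⟨e, he⟩ := S.edge_exists v
  exact Finset.sum_pos (fun e _ => mul_pos (S.weight_pos τ s i e) (hu e _)) ⟨e, by simpa using he⟩

lemma Gmat_mulVec (u : E → Bool → ℝ) (e : E) (i : Bool) :
    (S.Gmat p (τ · false) (τ · true) 0 0 s *ᵥ fun j => u j.1 j.2) (e, i) =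
      S.transfer τ s u (S.term e) i := by
  rw [Matrix.mulVec, dotProduct, Fintype.sum_prod_type, transfer, Finset.sum_filter]
  refine Finset.sum_congr rfl fun e' _ => ?_
  by_cases h : S.init e' = S.term e <;> simp [Gmat_apply, h]

lemma exists_subharmonic [Nonempty E]
    (hγ : specRad (S.Gmat p (τ · false) (τ · true) 0 0 γ) = 1) :
    ∃ H : V → Bool → ℝ, 0 ≤ H ∧ (∃ v i, 0 < H v i) ∧ H ≤ S.transfer τ γ (H ∘ S.term) := by
  obtain ⟨h, h0, ⟨⟨e₀, i₀⟩, hpos⟩, hsub⟩ :=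
    exists_nonneg_subsolution (S.Gmat_nonneg (p := p) (τ := τ) (s := γ))
  let u : E → Bool → ℝ := fun e i => h (e, i)
  have hu : u ≤ S.transfer τ γ u ∘ S.term := fun e i => by
    have := hsub (e, i)
    rwa [hγ, one_mul, S.Gmat_mulVec u] at this
  refine ⟨S.transfer τ γ u, fun v i => ?_, ⟨S.term e₀, i₀, hpos.trans_le (hu e₀ i₀)⟩,
    S.transfer_mono hu⟩
  exact Finset.sum_nonneg fun e _ => mul_nonneg (S.weight_pos _ _ _ _).le (h0 _)

/-- Shifting all exponents by `η` multiplies the weights by `len i e ^ η`, which leaves room for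
the strict supersolutions of `𝒢`. -/
lemma exists_superharmonic (hγ : specRad (S.Gmat p (τ · false) (τ · true) 0 0 γ) = 1)
    (hη : 0 < η) :
    ∃ U : V → Bool → ℝ, (∀ v i, 0 < U v i) ∧
      S.transfer (fun v i => τ v i + η) (γ + η) (U ∘ S.term) ≤ U := by
  obtain ⟨lo, hi, hS⟩ := S.exists_lenBounds
  have hhi : 0 < hi ^ η := Real.rpow_pos_of_pos hS.hi_pos η
  have hhi1 : hi ^ η < 1 := Real.rpow_lt_one hS.hi_pos.le hS.hi_lt_one hη
  obtain ⟨h, h1, hsup⟩ := exists_pos_supersolution (S.Gmat_nonneg (p := p) (τ := τ) (s := γ))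
    (inv_pos.2 hhi) (hγ.trans_lt ((one_lt_inv₀ hhi).2 hhi1))
  let u : E → Bool → ℝ := fun e i => h (e, i)
  have hupos : ∀ e i, 0 < u e i := fun e i => one_pos.trans_le (h1 _)
  have hu : ∀ e i, hi ^ η * S.transfer τ γ u (S.term e) i ≤ u e i := fun e i => by
    rw [← le_inv_mul_iff₀ hhi, ← S.Gmat_mulVec (p := p)]
    exact hsup (e, i)
  refine ⟨S.transfer τ γ u, S.transfer_pos hupos, fun v i => Finset.sum_le_sum fun e _ => ?_⟩
  have hT := (S.transfer_pos (τ := τ) (s := γ) hupos (S.term e) (S.turn e i)).le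
  have hlen : S.len i e ^ η ≤ hi ^ η :=
    Real.rpow_le_rpow (S.len_pos i e).le (hS.len_mem i e).2 hη.le
  calc S.weight (fun v i => τ v i + η) (γ + η) i e * S.transfer τ γ u (S.term e) (S.turn e i)
      = S.weight τ γ i e * (S.len i e ^ η * S.transfer τ γ u (S.term e) (S.turn e i)) := by
        rw [S.weight_add τ γ, add_sub_cancel_left, sub_self, Real.rpow_zero]
        ring
    _ ≤ S.weight τ γ i e * u e (S.turn e i) := by
        have hw := (S.weight_pos τ γ i e).le
        gcongr
        exact (mul_le_mul_of_nonneg_right hlen hT).trans (hu e _)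

end Transfer

section Potential

variable {σ : V → Bool → ℝ} {s : ℝ} {H H' : V → Bool → ℝ} {v : V} {δ : Bool → ℝ}

/-- The combination with coefficients `H v b` of the monomials in the half side lengths `δ` of a
box whose growth under `rescale e` is `weight σ s b e`; it models the size of covers and packings of
`X v` by boxes with half side lengths `δ`. -/
noncomputable def potential (σ : V → Bool → ℝ) (s : ℝ) (H : V → Bool → ℝ) (v : V)
    (δ : Bool → ℝ) : ℝ :=
  ∑ b, H v b * (δ b ^ (-σ v b) * δ (!b) ^ (-(s - σ v b)))

lemma potential_eq (j : Bool) : potential σ s H v δ =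
    H v (!j) * (δ (!j) ^ (-σ v !j) * δ j ^ (-(s - σ v !j))) +
      H v j * (δ j ^ (-σ v j) * δ (!j) ^ (-(s - σ v j))) := by
  cases j
  · simp [potential]
  · simp [potential, add_comm]

lemma potential_const {d : ℝ} (hd : 0 < d) :
    potential σ s H v (fun _ => d) = (∑ b, H v b) * d ^ (-s) := by
  simp only [potential, ← Real.rpow_add hd, Finset.sum_mul]
  exact Finset.sum_congr rfl fun b _ => by ring_nf

lemma potential_mono (h : H ≤ H') (hδ : ∀ i, 0 < δ i) :
    potential σ s H v δ ≤ potential σ s H' v δ :=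
  Finset.sum_le_sum fun b _ => mul_le_mul_of_nonneg_right (h v b)
    (mul_pos (Real.rpow_pos_of_pos (hδ _) _) (Real.rpow_pos_of_pos (hδ _) _)).le

lemma potential_nonneg (hH : 0 ≤ H) (hδ : ∀ i, 0 < δ i) : 0 ≤ potential σ s H v δ := by
  simpa [potential] using potential_mono (σ := σ) (s := s) (v := v) hH hδ

lemma sum_potential_rescale [Fintype E]
    (hσ : ∀ e i, σ (S.term e) (S.turn e i) = σ (S.init e) i) (hδ : ∀ i, 0 < δ i) :
    ∑ e with S.init e = v, potential σ s H (S.term e) (S.rescale e δ) =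
      potential σ s (S.transfer σ s (H ∘ S.term)) v δ := by
  have hdiv : ∀ e i (x : ℝ), (δ i / S.len i e) ^ (-x) = S.len i e ^ x * δ i ^ (-x) :=
    fun e i x => by
      rw [Real.div_rpow (hδ i).le (S.len_pos i e).le, Real.rpow_neg (S.len_pos i e).le,
        div_inv_eq_mul, mul_comm]
  simp only [potential, transfer, Finset.sum_mul]
  rw [Finset.sum_comm (s := Finset.univ)]
  refine Finset.sum_congr rfl fun e he => ?_
  obtain rfl : S.init e = v := by simpa using he
  rw [← (Function.Involutive.bijective (S.turn_turn e)).sum_comp]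
  refine Finset.sum_congr rfl fun b _ => ?_
  rw [← turn_not, rescale_turn, rescale_turn, hdiv, hdiv, weight, hσ, Function.comp_apply]
  ring

lemma exists_rpow_le_potential (hH : ∀ b, 0 < H v b) (j : Bool) (R : ℝ) :
    ∃ C > 0, ∀ δ : Bool → ℝ, 0 < δ (!j) → δ j ∈ Icc 1 R →
      δ (!j) ^ (-σ v !j) ≤ C * potential σ s H v δ := by
  obtain ⟨D, hD, hle⟩ := exists_rpow_le_on_Icc (s - σ v !j) (M := R) one_pos
  have hHj := hH !j
  refine ⟨D / H v !j, by positivity, fun δ hi hj => ?_⟩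
  have hj0 : 0 < δ j := one_pos.trans_le hj.1
  have hone : 1 ≤ D * δ j ^ (-(s - σ v !j)) := by
    rw [Real.rpow_neg hj0.le, ← div_eq_mul_inv, one_le_div (Real.rpow_pos_of_pos hj0 _)]
    exact hle _ hj
  calc δ (!j) ^ (-σ v !j) ≤ δ (!j) ^ (-σ v !j) * (D * δ j ^ (-(s - σ v !j))) :=
        le_mul_of_one_le_right (Real.rpow_pos_of_pos hi _).le hone
    _ = D / H v (!j) * (H v (!j) * (δ (!j) ^ (-σ v !j) * δ j ^ (-(s - σ v !j)))) := by
        field_simp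
    _ ≤ D / H v (!j) * potential σ s H v δ := by
        rw [potential_eq j]
        have := (hH j).le
        gcongr
        exact le_add_of_nonneg_right (by positivity)

lemma exists_potential_le_rpow (hH : 0 ≤ H) {j : Bool} {x m : ℝ} (hm : 0 < m)
    (hx : σ v (!j) ≤ x) (hx' : s - σ v j ≤ x) :
    ∃ C > 0, ∀ δ : Bool → ℝ, δ (!j) ∈ Ioc 0 1 → δ j ∈ Icc m 1 →
      potential σ s H v δ ≤ C * δ (!j) ^ (-x) := by
  obtain ⟨D, hD, hle⟩ := exists_rpow_le_on_Icc (-(s - σ v !j)) (M := 1) hm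
  obtain ⟨D', hD', hle'⟩ := exists_rpow_le_on_Icc (-σ v j) (M := 1) hm
  have hHi := hH v !j
  have hHj := hH v j
  rw [Pi.zero_apply, Pi.zero_apply] at hHi hHj
  refine ⟨H v (!j) * D + H v j * D' + 1, by positivity, fun δ hi hj => ?_⟩
  have hi0 := hi.1
  have hj0 : 0 < δ j := hm.trans_le hj.1
  have hmono : ∀ y ≤ x, δ (!j) ^ (-y) ≤ δ (!j) ^ (-x) := fun y hy =>
    Real.rpow_le_rpow_of_exponent_ge hi.1 hi.2 (neg_le_neg hy)
  have hnot := mul_le_mul (hmono _ hx) (hle _ hj) (by positivity) (by positivity)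
  have hself := mul_le_mul (hle' _ hj) (hmono _ hx') (by positivity) hD'.le
  calc potential σ s H v δ
      ≤ H v (!j) * (δ (!j) ^ (-x) * D) + H v j * (D' * δ (!j) ^ (-x)) := by
        rw [potential_eq j]
        exact add_le_add (mul_le_mul_of_nonneg_left hnot hHi)
          (mul_le_mul_of_nonneg_left hself hHj)
    _ ≤ (H v (!j) * D + H v j * D' + 1) * δ (!j) ^ (-x) := by
        linarith [Real.rpow_pos_of_pos hi0 (-x)]

end Potential

end BoxLikeGIFS

namespace BoxLikeGIFS

section Counting

variable {V E : Type*} {S : BoxLikeGIFS V E} {X : V → Set (ℝ × ℝ)} {σ H U : V → Bool → ℝ}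
  {s : ℝ}

/-- Induction on the number of rescalings after which a half side length of a box is at least
`m`. -/
lemma LenBounds.rescale_induction {lo hi d m : ℝ} (hS : S.LenBounds lo hi) (hd : 0 < d)
    (hm : 0 < m) {Q : V → (Bool → ℝ) → Prop}
    (base : ∀ v δ j, (∀ i, δ i ∈ Icc d (m / lo)) → m ≤ δ j → Q v δ)
    (step : ∀ v δ, (∀ i, 0 < δ i) →
      (∀ e, S.init e = v → Q (S.term e) (S.rescale e δ)) → Q v δ)
    (v : V) {δ : Bool → ℝ} (hδ : ∀ i, δ i ∈ Icc d (m / lo)) : Q v δ := by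
  obtain ⟨n, hn⟩ : ∃ n : ℕ, m * hi ^ n ≤ d := by
    have hlim : Tendsto (fun n : ℕ => m * hi ^ n) atTop (nhds 0) := by
      simpa using (tendsto_pow_atTop_nhds_zero_of_lt_one hS.hi_pos.le hS.hi_lt_one).const_mul m
    exact (hlim.eventually_le_const hd).exists
  replace hn : ∀ i, m * hi ^ n ≤ δ i := fun i => hn.trans (hδ i).1
  induction n generalizing v δ with
  | zero => exact base v δ false hδ (by simpa using hn false)
  | succ n ih =>
    by_cases hj : ∃ j, m ≤ δ j
    · exact hj.elim fun j => base v δ j hδ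
    push Not at hj
    have hpos : ∀ i, 0 < δ i := fun i => hd.trans_le (hδ i).1
    refine step v δ hpos fun e _ => ih (S.term e) ((S.forall_turn_iff e).1 fun i => ?_)
      ((S.forall_turn_iff e).1 fun i => ?_) <;> rw [rescale_turn]
    · refine ⟨(hδ i).1.trans (le_div_self (hpos i).le (S.len_pos i e) (S.len_mem_Ioo i e).2.le), ?_⟩
      exact div_le_div₀ hm.le (hj i).le hS.lo_pos (hS.len_mem i e).1
    · rw [le_div_iff₀ (S.len_pos i e)]
      calc m * hi ^ n * S.len i e ≤ m * hi ^ n * hi := by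
            have := hS.hi_pos
            gcongr
            exact (hS.len_mem i e).2
        _ = m * hi ^ (n + 1) := by ring
        _ ≤ δ i := hn i

lemma exists_coverableBy_potential [Finite V] (hX : ∀ v, X v ⊆ Icc 0 1)
    (hσX : ∀ v i, CoveringUpperBound (coord i '' X v) (σ v i)) (hU : ∀ v i, 0 < U v i) (R : ℝ) :
    ∃ C, ∀ v δ j, (∀ i, δ i ∈ Ioc 0 R) → 1 ≤ δ j →
      CoverableBy (X v) δ (C * potential σ s U v δ) := by
  have hlocal : ∀ v j, ∃ C, ∀ δ : Bool → ℝ, (∀ i, δ i ∈ Ioc 0 R) → 1 ≤ δ j →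
      CoverableBy (X v) δ (C * potential σ s U v δ) := by
    intro v j
    obtain ⟨C, hC, hcover⟩ := (hσX v (!j)).exists_forall_le R
    obtain ⟨D, -, hD⟩ := exists_rpow_le_potential (σ := σ) (s := s) (hU v) j R
    refine ⟨C * D, fun δ hδ hj => ?_⟩
    obtain ⟨F, hF, hFcard⟩ := hcover (δ !j) (hδ _).1 (hδ _).2
    refine (CoverableBy.of_coord (hX v) (by simpa using hj) hF).mono (hFcard.trans ?_)
    rw [mul_assoc]
    exact mul_le_mul_of_nonneg_left (hD δ (hδ _).1 ⟨hj, (hδ j).2⟩) hC.le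
  choose C hC using hlocal
  obtain ⟨M, hM⟩ := Finite.exists_le fun x : V × Bool => C x.1 x.2
  refine ⟨M, fun v δ j hδ hj => (hC v j δ hδ hj).mono ?_⟩
  exact mul_le_mul_of_nonneg_right (hM (v, j))
    (potential_nonneg (fun v b => (hU v b).le) fun i => (hδ i).1)

theorem IsGDAttractor.coveringUpperBound [Fintype E] (hX : S.IsGDAttractor X) (hROSC : S.ROSC)
    (hσX : ∀ v i, CoveringUpperBound (coord i '' X v) (σ v i))
    (hσ : ∀ e i, σ (S.term e) (S.turn e i) = σ (S.init e) i) (hU : ∀ v i, 0 < U v i)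
    (hsup : S.transfer σ s (U ∘ S.term) ≤ U) (v : V) : CoveringUpperBound (X v) s := by
  have : Finite V := Finite.of_surjective S.init S.edge_exists
  obtain ⟨lo, hi, hS⟩ := S.exists_lenBounds
  obtain ⟨C₀, hC₀⟩ :=
    exists_coverableBy_potential (s := s) (hX.subset_Icc hROSC) hσX hU (1 / lo)
  let C := max C₀ 1
  have hcover : ∀ d, 0 < d → d ≤ 1 →
      CoverableBy (X v) (fun _ => d) (C * potential σ s U v fun _ => d) := by
    intro d hd hd1
    refine hS.rescale_induction (Q := fun v δ => CoverableBy (X v) δ (C * potential σ s U v δ)) hd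
      one_pos (fun v δ j hδ hj => ?_) (fun v δ hδ h => ?_) v fun _ =>
        ⟨le_rfl, hd1.trans ((one_le_div hS.lo_pos).2 hS.lo_lt_one.le)⟩
    · have hδ' : ∀ i, δ i ∈ Ioc 0 (1 / lo) := fun i => ⟨hd.trans_le (hδ i).1, (hδ i).2⟩
      refine (hC₀ v δ j hδ' hj).mono (mul_le_mul_of_nonneg_right (le_max_left _ _) ?_)
      exact potential_nonneg (fun v b => (hU v b).le) fun i => (hδ' i).1
    · refine (hX.coverableBy_sum h).mono ?_
      rw [← Finset.mul_sum, S.sum_potential_rescale hσ hδ]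
      exact mul_le_mul_of_nonneg_left (potential_mono hsup hδ) (by positivity)
  have hUv : 0 < ∑ b, U v b := Finset.sum_pos (fun b _ => hU v b) Finset.univ_nonempty
  refine ⟨C * ∑ b, U v b, by positivity, ?_⟩
  filter_upwards [Ioo_mem_nhdsGT one_pos] with d hd
  obtain ⟨F, hF, hFcard⟩ := hcover d hd.1 hd.2.le
  refine ⟨F, isBoxCover_const_iff.1 hF, ?_⟩
  rwa [potential_const hd.1, ← mul_assoc] at hFcard

lemma exists_packableBy_potential [Finite V] (hX : ∀ v, X v ⊆ Icc 0 1) (hne : ∀ v, (X v).Nonempty)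
    {ρ : V → Bool → ℝ} (hρX : ∀ v i, CoveringLowerBound (coord i '' X v) (ρ v i)) {κ m : ℝ}
    (hκ : 0 ≤ κ) (hσκ : ∀ v i, σ v i ≤ ρ v i + κ) (hsκ : ∀ v i, s - σ v (!i) ≤ ρ v i + κ)
    (hH : 0 ≤ H) (hm : 0 < m) :
    ∃ c > 0, ∀ v δ d j, 0 < d → (∀ i, δ i ∈ Icc d (1 / 2)) → m ≤ δ j →
      PackableBy (X v) δ (c * d ^ κ * potential σ s H v δ) := by
  have hlocal : ∀ v j, ∃ c > 0, ∀ (δ : Bool → ℝ) (d : ℝ), 0 < d → (∀ i, δ i ∈ Icc d (1 / 2)) →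
      m ≤ δ j → PackableBy (X v) δ (c * d ^ κ * potential σ s H v δ) := by
    intro v j
    have hcoord : coord (!j) '' X v ⊆ Icc 0 1 :=
      image_subset_iff.2 fun x hx => mem_Icc_iff_coord.1 (hX v hx) _
    obtain ⟨c, hc, hpack⟩ := (hρX v (!j)).exists_isLinePacking hcoord ((hne v).image _)
    obtain ⟨C, hC, hle⟩ := exists_potential_le_rpow (σ := σ) (s := s) (v := v) hH hm
      (hσκ v !j) (by simpa using hsκ v !j)
    refine ⟨c * C⁻¹, by positivity, fun δ d hd hδ hj => ?_⟩
    have hδ0 : 0 < δ !j := hd.trans_le (hδ _).1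
    obtain ⟨P, hP, hPcard⟩ := hpack (δ !j) hδ0 (hδ _).2
    refine (hP.packableBy (hX v) (by simpa using (hd.le.trans (hδ j).1))
      (by simpa using (hδ j).2)).mono (le_trans ?_ hPcard)
    have hpot := hle δ ⟨hδ0, (hδ _).2.trans (by norm_num)⟩ ⟨hj, (hδ j).2.trans (by norm_num)⟩
    have hloss : d ^ κ ≤ δ (!j) ^ κ := Real.rpow_le_rpow hd.le (hδ _).1 hκ
    calc c * C⁻¹ * d ^ κ * potential σ s H v δ
        ≤ c * C⁻¹ * d ^ κ * (C * δ (!j) ^ (-(ρ v (!j) + κ))) := by gcongr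
      _ = c * (d ^ κ * δ (!j) ^ (-(ρ v (!j) + κ))) := by field_simp
      _ ≤ c * (δ (!j) ^ κ * δ (!j) ^ (-(ρ v (!j) + κ))) := by gcongr
      _ = c * δ (!j) ^ (-ρ v (!j)) := by rw [← Real.rpow_add hδ0]; ring_nf
  choose c hc hpack using hlocal
  obtain ⟨M, hM⟩ := Finite.exists_le fun x : V × Bool => (c x.1 x.2)⁻¹
  refine ⟨(max M 1)⁻¹, by positivity, fun v δ d j hd hδ hj => (hpack v j δ d hd hδ hj).mono ?_⟩
  have hpot : 0 ≤ potential σ s H v δ := potential_nonneg hH fun i => hd.trans_le (hδ i).1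
  gcongr
  exact inv_le_of_inv_le₀ (hc v j) ((hM (v, j)).trans (le_max_left _ _))

theorem IsGDAttractor.coveringLowerBound [Fintype E] (hX : S.IsGDAttractor X) (hROSC : S.ROSC)
    {ρ : V → Bool → ℝ} (hρX : ∀ v i, CoveringLowerBound (coord i '' X v) (ρ v i)) {κ : ℝ}
    (hκ : 0 ≤ κ) (hσκ : ∀ v i, σ v i ≤ ρ v i + κ) (hsκ : ∀ v i, s - σ v (!i) ≤ ρ v i + κ)
    (hσ : ∀ e i, σ (S.term e) (S.turn e i) = σ (S.init e) i) (hH : 0 ≤ H)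
    (hsub : H ≤ S.transfer σ s (H ∘ S.term)) {v : V} {b : Bool} (hb : 0 < H v b) :
    CoveringLowerBound (X v) (s - κ) := by
  have : Finite V := Finite.of_surjective S.init S.edge_exists
  obtain ⟨lo, hi, hS⟩ := S.exists_lenBounds
  have hlo := hS.lo_pos
  obtain ⟨c, hc, hpack⟩ := exists_packableBy_potential (s := s) (hX.subset_Icc hROSC)
    (fun v => (hX.1 v).1) hρX hκ hσκ hsκ hH (m := lo / 2) (by positivity)
  have hlo2 : lo / 2 / lo = 1 / 2 := by field_simp
  have hpackable : ∀ d, 0 < d → d ≤ 1 / 2 →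
      PackableBy (X v) (fun _ => d) (c * d ^ κ * potential σ s H v fun _ => d) := by
    intro d hd hd2
    refine hS.rescale_induction
      (Q := fun v δ => PackableBy (X v) δ (c * d ^ κ * potential σ s H v δ)) (m := lo / 2) hd
      (by positivity) (fun v δ j hδ hj => hpack v δ d j hd (by rwa [hlo2] at hδ) hj)
      (fun v δ hδ h => (hX.packableBy_sum hROSC hδ h).mono ?_) v
      fun _ => ⟨le_rfl, hd2.trans_eq hlo2.symm⟩
    rw [← Finset.mul_sum, S.sum_potential_rescale hσ hδ]
    exact mul_le_mul_of_nonneg_left (potential_mono hsub hδ) (by positivity)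
  have hHv : 0 < ∑ b, H v b :=
    Finset.sum_pos' (fun b _ => hH v b) ⟨b, Finset.mem_univ b, hb⟩
  refine ⟨c * (∑ b, H v b) / 25, by positivity, ?_⟩
  filter_upwards [Ioo_mem_nhdsGT (one_half_pos (α := ℝ))] with d ⟨hd, hd2⟩ F hF
  obtain ⟨P, hP, hPcard⟩ := hpackable d hd hd2.le
  rw [potential_const hd] at hPcard
  have hle : (P.card : ℝ) ≤ 25 * F.card := mod_cast hP.card_le_card_cover hd hF
  have hsplit : d ^ (-(s - κ)) = d ^ κ * d ^ (-s) := by rw [← Real.rpow_add hd]; ring_nf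
  rw [hsplit]
  linarith

end Counting

end BoxLikeGIFS

lemma CoveringUpperBound.of_image_coord {X : Set (ℝ × ℝ)} {s : Bool → ℝ}
    (h : ∀ i, CoveringUpperBound (coord i '' X) (s i)) :
    CoveringUpperBound X (s false + s true) :=
  ((h false).prod (h true)).mono fun _ hx => ⟨mem_image_of_mem _ hx, mem_image_of_mem _ hx⟩

namespace BoxLikeGIFS

section Exponent

variable {V E : Type*} {S : BoxLikeGIFS V E} {X : V → Set (ℝ × ℝ)} {τ : V → Bool → ℝ}
  {s γ t : ℝ} {p : E → ℝ}

lemma IsGDAttractor.exponent_term_le (hX : S.IsGDAttractor X)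
    (hτ : ∀ v i, HasCoveringExponent (coord i '' X v) (τ v i)) (e : E) (i : Bool) :
    τ (S.term e) (S.turn e i) ≤ τ (S.init e) i :=
  (hτ _ _).le_of_antilipschitzWith (hτ _ _) (S.antilipschitzWith_axisMap i e)
    (hX.mapsTo_axisMap i e)

/-- Both exponents at `t(e)` are at most the corresponding ones at `i(e)`, and the sums agree. -/
lemma IsGDAttractor.exponent_term_eq (hX : S.IsGDAttractor X)
    (hτ : ∀ v i, HasCoveringExponent (coord i '' X v) (τ v i))
    (ht : ∀ v i, τ v i + τ v (!i) = t) (e : E) (i : Bool) :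
    τ (S.term e) (S.turn e i) = τ (S.init e) i := by
  have hnot := hX.exponent_term_le hτ e (!i)
  rw [turn_not] at hnot
  linarith [hX.exponent_term_le hτ e i, ht (S.term e) (S.turn e i), ht (S.init e) i]

lemma IsGDAttractor.coveringLowerBound_of_stronglyConnected (hX : S.IsGDAttractor X)
    (hSC : S.StronglyConnected) {w : V} (h : CoveringLowerBound (X w) s) (v : V) :
    CoveringLowerBound (X v) s := by
  induction hSC v w using Relation.TransGen.head_induction_on with
  | single he =>
    obtain ⟨e, rfl, rfl⟩ := he
    exact h.of_antilipschitzWith (S.antilipschitzWith_map e) (hX.mapsTo_map e)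
  | head he _ ih =>
    obtain ⟨e, rfl, rfl⟩ := he
    exact ih.of_antilipschitzWith (S.antilipschitzWith_map e) (hX.mapsTo_map e)

variable [Fintype E]

/-- If `t < γ`, the packing bound with all exponents raised by a small `η` would produce more boxes
than the product of the coordinate projections admits. -/
lemma IsGDAttractor.le_of_specRad_Gmat_eq_one [Nonempty E] (hX : S.IsGDAttractor X)
    (hROSC : S.ROSC) (hτ : ∀ v i, HasCoveringExponent (coord i '' X v) (τ v i))
    (ht : ∀ v i, τ v i + τ v (!i) = t)
    (hγ : specRad (S.Gmat p (τ · false) (τ · true) 0 0 γ) = 1) : γ ≤ t := by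
  by_contra! htγ
  obtain ⟨η, hη, hweight⟩ := S.exists_weight_le_weight_add (τ := τ) htγ
  obtain ⟨H, hH, ⟨v, b, hb⟩, hsub⟩ := S.exists_subharmonic hγ
  have hsub' : H ≤ S.transfer (fun v i => τ v i + η) (t + 2 * η) (H ∘ S.term) :=
    hsub.trans fun _ i => Finset.sum_le_sum fun e _ =>
      mul_le_mul_of_nonneg_right (hweight i e) (hH _ _)
  have hlower : CoveringLowerBound (X v) (t + 2 * η - 3 / 2 * η) :=
    hX.coveringLowerBound hROSC (fun v i => (hτ v i (η / 2) (by positivity)).2) (by positivity)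
      (fun v i => by linarith) (fun v i => by linarith [ht v i])
      (fun e i => by rw [hX.exponent_term_eq hτ ht]) hH hsub' hb
  have hupper := CoveringUpperBound.of_image_coord fun i => (hτ v i (η / 8) (by positivity)).1
  have htv : τ v false + τ v true = t := ht v false
  linarith [hlower.le hupper]

theorem IsGDAttractor.hasCoveringExponent [Nonempty E] (hX : S.IsGDAttractor X)
    (hSC : S.StronglyConnected) (hROSC : S.ROSC)
    (hτ : ∀ v i, HasCoveringExponent (coord i '' X v) (τ v i))
    (ht : ∀ v i, τ v i + τ v (!i) = t)
    (hγ : specRad (S.Gmat p (τ · false) (τ · true) 0 0 γ) = 1) (v : V) :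
    HasCoveringExponent (X v) γ := by
  have hinv := hX.exponent_term_eq hτ ht
  have hγt := hX.le_of_specRad_Gmat_eq_one hROSC hτ ht hγ
  refine fun ε hε => ⟨?_, ?_⟩
  · obtain ⟨U, hU, hsup⟩ := S.exists_superharmonic hγ hε
    exact hX.coveringUpperBound hROSC (fun v i => (hτ v i ε hε).1)
      (fun e i => by rw [hinv]) hU hsup v
  · obtain ⟨H, hH, ⟨w, b, hb⟩, hsub⟩ := S.exists_subharmonic hγ
    refine hX.coveringLowerBound_of_stronglyConnected hSC (w := w) ?_ v
    exact hX.coveringLowerBound hROSC (fun v i => (hτ v i ε hε).2) hε.le (fun v i => by linarith)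
      (fun v i => by linarith [ht v i]) hinv hH hsub hb

end Exponent

end BoxLikeGIFS

end LqGIFS

/-- box dimensions, general setting.  For a strongly connected planar
box-like self-affine GIFS satisfying the ROSC, the box dimension of every carpet `X_v`
exists and equals `γ̂(0)`. -/
theorem statement7
    {V E : Type} [Fintype V] [Fintype E] [Nonempty V]
    (S : BoxLikeGIFS V E) (hSC : S.StronglyConnected) (hROSC : S.ROSC)
    (X : V → Set (ℝ × ℝ)) (hX : S.IsGDAttractor X)
    (p : E → ℝ) (hp : S.IsWeights p)
    (μ : V → Measure (ℝ × ℝ)) (hμ : S.IsGDMeasure p μ)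
    (τx τy : V → ℝ)
    (hτx : ∀ v : V, HasLq1 ((μ v).map Prod.fst) 0 (τx v))
    (hτy : ∀ v : V, HasLq1 ((μ v).map Prod.snd) 0 (τy v))
    (t0 : ℝ) (ht0 : ∀ v : V, τx v + τy v = t0)
    (γhat : ℝ)
    (hγhat : specRad (S.Gmat p τx τy 0 0 γhat) = 1) :
    ∀ v : V, HasBoxDim (X v) γhat := by
  let τ : V → Bool → ℝ := fun v i => if i then τy v else τx v
  have hτ : ∀ v i, HasCoveringExponent (coord i '' X v) (τ v i) := fun v i => by
    cases i
    exacts [hμ.hasCoveringExponent_image_coord hp hX (hτx v),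
      hμ.hasCoveringExponent_image_coord hp hX (hτy v)]
  have ht : ∀ v i, τ v i + τ v (!i) = t0 := fun v i => by
    cases i
    exacts [ht0 v, (add_comm _ _).trans (ht0 v)]
  have : Nonempty E := (S.edge_exists (Classical.arbitrary V)).nonempty
  exact fun v => (hX.hasCoveringExponent hSC hROSC hτ ht hγhat v).hasBoxDim
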